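/- arXiv:1801.10298 — 7 statements merged into one kernel-verified Lean document; each statement's English description precedes it below -/
import Mathlib

section
/- For every real (p+q)×(p+q) matrix X satisfying Xᵀ·I_{p,q} + I_{p,q}·X = 0 (i.e. X ∈ 𝔬(p,q)), the function f_X : W → ℝ defined by f_X(z) = (1/2)·tr(μ(z)·X) is differentiable, and for every z ∈ W and every w ∈ W the differential of f_X at z evaluated at w equals ω(−X·z, w), where X·z := X·x + i·X·y for z = x + i·y. (That is, d⟨μ,X⟩ = ι(X_W)ω with X_W(z) = −Xz, so μ is a moment map for the O(p,q)-action on (W,ω).) -/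
noncomputable section

/-- The matrix `I_{p,q} = diag(1_p, −1_q)` over `ℝ`. -/
def IpqR (p q : ℕ) : Matrix (Fin (p + q)) (Fin (p + q)) ℝ :=
  Matrix.diagonal (fun i => if (i : ℕ) < p then 1 else -1)

/-- The symplectic form `ω(z,w) = Im(z* I_{p,q} w)` on `W = (ℂ^{p+q})_ℝ`. -/
def omegaW (p q : ℕ) (z w : Fin (p + q) → ℂ) : ℝ :=
  (∑ i, (starRingEnd ℂ) (z i) * ((IpqR p q i i : ℝ) : ℂ) * w i).im

/-- The moment map `μ(x + i·y) = (−x·yᵀ + y·xᵀ)·I_{p,q}`. -/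
def muW (p q : ℕ) (z : Fin (p + q) → ℂ) : Matrix (Fin (p + q)) (Fin (p + q)) ℝ :=
  (Matrix.of fun i j => -((z i).re * (z j).im) + (z i).im * (z j).re) * IpqR p q

end

theorem stmt_0 (p q : ℕ) (hp : 1 ≤ p) (hq : 1 ≤ q)
    (X : Matrix (Fin (p + q)) (Fin (p + q)) ℝ)
    (hX : X.transpose * IpqR p q + IpqR p q * X = 0) :
    Differentiable ℝ
      (fun z : Fin (p + q) → ℂ => (1 / 2 : ℝ) * Matrix.trace (muW p q z * X)) ∧
    ∀ z w : Fin (p + q) → ℂ,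
      fderiv ℝ (fun z : Fin (p + q) → ℂ => (1 / 2 : ℝ) * Matrix.trace (muW p q z * X)) z w =
        omegaW p q (fun i => -∑ j, ((X i j : ℝ) : ℂ) * z j) w := by
  set d : Fin (p + q) → ℝ := fun i => if (i : ℕ) < p then 1 else -1 with hd
  have hI : IpqR p q = Matrix.diagonal d := rfl
  have hS : ∀ i j, d i * X i j = -(d j * X j i) := by
    intro i j
    have h := congrFun (congrFun hX i) j
    rw [hI] at h
    simp only [Matrix.add_apply, Matrix.mul_diagonal, Matrix.diagonal_mul,
      Matrix.transpose_apply, Matrix.zero_apply] at h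
    linarith
  have hf : (fun z : Fin (p + q) → ℂ => (1 / 2 : ℝ) * Matrix.trace (muW p q z * X)) =
      fun z => ∑ i, ∑ j, (d i * X i j) * ((z i).re * (z j).im) := by
    funext z
    have h1 : Matrix.trace (muW p q z * X) =
        ∑ i, ∑ j, (-((z i).re * (z j).im) + (z i).im * (z j).re) * (d j * X j i) := by
      simp only [muW, hI, Matrix.trace, Matrix.diag_apply, Matrix.mul_apply (N := X),
        Matrix.mul_diagonal, Matrix.of_apply]
      simp only [mul_assoc]
    have h2 : ∑ i, ∑ j, (-((z i).re * (z j).im) + (z i).im * (z j).re) * (d j * X j i) =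
        ∑ i, ∑ j, (d i * X i j) * ((z i).re * (z j).im) +
        ∑ i, ∑ j, (d j * X j i) * ((z j).re * (z i).im) := by
      simp only [← Finset.sum_add_distrib]
      refine Finset.sum_congr rfl fun i _ => Finset.sum_congr rfl fun j _ => ?_
      rw [hS i j]; ring
    rw [h1, h2, Finset.sum_comm (f := fun i j => (d j * X j i) * ((z j).re * (z i).im))]
    ring
  rw [hf]
  have hder : ∀ z : Fin (p + q) → ℂ, HasFDerivAt
      (fun z : Fin (p + q) → ℂ => ∑ i, ∑ j, (d i * X i j) * ((z i).re * (z j).im))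
      (∑ i, ∑ j, (d i * X i j) •
        ((z i).re • (Complex.imCLM.comp (ContinuousLinearMap.proj (R := ℝ) (φ := fun _ => ℂ) j)) +
         (z j).im • (Complex.reCLM.comp
          (ContinuousLinearMap.proj (R := ℝ) (φ := fun _ : Fin (p + q) => ℂ) i)))) z := by
    intro z
    refine HasFDerivAt.fun_sum fun i _ => HasFDerivAt.fun_sum fun j _ => ?_
    refine HasFDerivAt.const_mul ?_ _
    exact HasFDerivAt.mul
      (Complex.reCLM.comp
        (ContinuousLinearMap.proj (R := ℝ) (φ := fun _ : Fin (p + q) => ℂ) i)).hasFDerivAt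
      (Complex.imCLM.comp
        (ContinuousLinearMap.proj (R := ℝ) (φ := fun _ : Fin (p + q) => ℂ) j)).hasFDerivAt
  refine ⟨fun z => (hder z).differentiableAt, fun z w => ?_⟩
  rw [(hder z).fderiv]
  have hL : omegaW p q (fun i => -∑ j, ((X i j : ℝ) : ℂ) * z j) w =
      ∑ i, ∑ j, (d i * X i j) * ((z j).im * (w i).re) +
      ∑ i, ∑ j, -((d i * X i j) * ((z j).re * (w i).im)) := by
    simp only [omegaW, hI, Matrix.diagonal_apply_eq, Complex.im_sum, ← Finset.sum_add_distrib]
    refine Finset.sum_congr rfl fun i _ => ?_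
    simp only [map_neg, map_sum, map_mul, Complex.conj_ofReal, ← Finset.sum_neg_distrib,
      Finset.sum_mul, Complex.im_sum]
    refine Finset.sum_congr rfl fun j _ => ?_
    simp
    ring
  rw [hL, Finset.sum_comm (f := fun i j => -((d i * X i j) * ((z j).re * (w i).im)))]
  simp only [ContinuousLinearMap.sum_apply, ← Finset.sum_add_distrib]
  refine Finset.sum_congr rfl fun i _ => Finset.sum_congr rfl fun j _ => ?_
  rw [hS j i]
  simp
  ring
end

section
/- For every g ∈ O(p,q), i.e. every real (p+q)×(p+q) matrix g with gᵀ·I_{p,q}·g = I_{p,q}, and every z ∈ W, one has μ(g·z) = g·μ(z)·g⁻¹, where g·z := g·x + i·g·y for z = x + i·y. (That is, the map μ is O(p,q)-equivariant.) -/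
theorem stmt_1 (p q : ℕ) (hp : 1 ≤ p) (hq : 1 ≤ q)
    (g : Matrix (Fin (p + q)) (Fin (p + q)) ℝ)
    (hg : g.transpose * IpqR p q * g = IpqR p q)
    (z : Fin (p + q) → ℂ) :
    muW p q (fun i => ∑ j, ((g i j : ℝ) : ℂ) * z j) = g * muW p q z * g⁻¹ := by
  have hII : IpqR p q * IpqR p q = 1 := by
    unfold IpqR
    rw [Matrix.diagonal_mul_diagonal, ← Matrix.diagonal_one]
    congr 1
    funext i
    split_ifs <;> norm_num
  have hinv : (IpqR p q * g.transpose * IpqR p q) * g = 1 := by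
    rw [Matrix.mul_assoc, Matrix.mul_assoc, ← Matrix.mul_assoc g.transpose, hg, hII]
  have hg1 : g⁻¹ = IpqR p q * g.transpose * IpqR p q := Matrix.inv_eq_left_inv hinv
  have key : IpqR p q * g⁻¹ = g.transpose * IpqR p q := by
    rw [hg1, ← Matrix.mul_assoc, ← Matrix.mul_assoc, hII, Matrix.one_mul]
  unfold muW
  rw [Matrix.mul_assoc g, Matrix.mul_assoc _ (IpqR p q), key, ← Matrix.mul_assoc,
    ← Matrix.mul_assoc]
  congr 1
  have hA : ∀ w : Fin (p + q) → ℂ,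
      (Matrix.of fun i j => -((w i).re * (w j).im) + (w i).im * (w j).re) =
      -Matrix.vecMulVec (fun i => (w i).re) (fun i => (w i).im)
        + Matrix.vecMulVec (fun i => (w i).im) (fun i => (w i).re) := by
    intro w
    ext i j
    simp [Matrix.vecMulVec_apply]
  have hre : (fun i => (∑ j, ((g i j : ℝ) : ℂ) * z j).re) = g.mulVec (fun i => (z i).re) := by
    funext i
    simp [Matrix.mulVec, dotProduct]
  have him : (fun i => (∑ j, ((g i j : ℝ) : ℂ) * z j).im) = g.mulVec (fun i => (z i).im) := by
    funext i
    simp [Matrix.mulVec, dotProduct]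
  rw [hA, hA, hre, him, Matrix.mul_add, Matrix.add_mul, Matrix.mul_neg, Matrix.neg_mul,
    Matrix.mul_vecMulVec, Matrix.mul_vecMulVec, Matrix.vecMulVec_mul, Matrix.vecMulVec_mul,
    Matrix.vecMul_transpose, Matrix.vecMul_transpose]
end

section
/- The endomorphisms H, X⁺, X⁻ of R satisfy the commutation relations of 𝔰𝔩₂: [H, X⁺] = 2·X⁺, [H, X⁻] = −2·X⁻, and [X⁺, X⁻] = H, where [A,B] = A∘B − B∘A. -/
noncomputable section

/-- The polynomial ring `ℂ[x₁,…,x_p, y₁,…,y_q]`. -/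
abbrev Rpq (p q : ℕ) := MvPolynomial (Fin p ⊕ Fin q) ℂ

/-- Multiplication by `x_i`. -/
def xop (p q : ℕ) (i : Fin p) : Module.End ℂ (Rpq p q) :=
  LinearMap.mulLeft ℂ (MvPolynomial.X (Sum.inl i))

/-- Multiplication by `y_j`. -/
def yop (p q : ℕ) (j : Fin q) : Module.End ℂ (Rpq p q) :=
  LinearMap.mulLeft ℂ (MvPolynomial.X (Sum.inr j))

/-- The partial derivative `∂_{x_i}`. -/
def dx (p q : ℕ) (i : Fin p) : Module.End ℂ (Rpq p q) :=
  (MvPolynomial.pderiv (Sum.inl i)).toLinearMap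

/-- The partial derivative `∂_{y_j}`. -/
def dy (p q : ℕ) (j : Fin q) : Module.End ℂ (Rpq p q) :=
  (MvPolynomial.pderiv (Sum.inr j)).toLinearMap

/-- The Euler operator `E_x = Σ_i x_i ∂_{x_i}`. -/
def Eop_x (p q : ℕ) : Module.End ℂ (Rpq p q) := ∑ i : Fin p, xop p q i * dx p q i

/-- The Euler operator `E_y = Σ_j y_j ∂_{y_j}`. -/
def Eop_y (p q : ℕ) : Module.End ℂ (Rpq p q) := ∑ j : Fin q, yop p q j * dy p q j

/-- Multiplication by `r_x² = Σ_i x_i²`. -/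
def rx2 (p q : ℕ) : Module.End ℂ (Rpq p q) :=
  LinearMap.mulLeft ℂ (∑ i : Fin p, MvPolynomial.X (Sum.inl i) ^ 2)

/-- Multiplication by `r_y² = Σ_j y_j²`. -/
def ry2 (p q : ℕ) : Module.End ℂ (Rpq p q) :=
  LinearMap.mulLeft ℂ (∑ j : Fin q, MvPolynomial.X (Sum.inr j) ^ 2)

/-- The Laplacian `Δ_x = Σ_i ∂_{x_i}²`. -/
def Δx (p q : ℕ) : Module.End ℂ (Rpq p q) := ∑ i : Fin p, dx p q i * dx p q i

/-- The Laplacian `Δ_y = Σ_j ∂_{y_j}²`. -/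
def Δy (p q : ℕ) : Module.End ℂ (Rpq p q) := ∑ j : Fin q, dy p q j * dy p q j

/-- `H = −E_x − (p/2)·id + E_y + (q/2)·id`. -/
def Hop (p q : ℕ) : Module.End ℂ (Rpq p q) :=
  -Eop_x p q - ((p : ℂ) / 2) • 1 + Eop_y p q + ((q : ℂ) / 2) • 1

/-- `X⁺ = −(1/2)(Δ_x + r_y²)`. -/
def Xplus (p q : ℕ) : Module.End ℂ (Rpq p q) :=
  -((1 : ℂ) / 2) • (Δx p q + ry2 p q)

/-- `X⁻ = (1/2)(r_x² + Δ_y)`. -/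
def Xminus (p q : ℕ) : Module.End ℂ (Rpq p q) :=
  ((1 : ℂ) / 2) • (rx2 p q + Δy p q)

/-- The matrix `I_{p,q} = diag(1_p, −1_q)` over `ℂ`. -/
def IpqC (p q : ℕ) : Matrix (Fin (p + q)) (Fin (p + q)) ℂ :=
  Matrix.diagonal (fun i => if (i : ℕ) < p then 1 else -1)

end

section helpers
variable {A ι : Type*} [Ring A] [Fintype ι] [DecidableEq ι]

theorem weyl_Ea (a d : ι → A) (haa : ∀ i j, a i * a j = a j * a i)
    (hda : ∀ i j, d i * a j = a j * d i + if i = j then 1 else 0) (j : ι) :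
    (∑ i, a i * d i) * a j = a j * (∑ i, a i * d i) + a j := by
  have h : ∀ i, a i * d i * a j = a j * (a i * d i) + if i = j then a i else 0 := by
    intro i
    rw [mul_assoc, hda, mul_add, ← mul_assoc, haa i j, mul_assoc]
    split_ifs <;> simp
  rw [Finset.sum_mul, Finset.mul_sum, Finset.sum_congr rfl (fun i _ => h i),
    Finset.sum_add_distrib]
  simp

theorem weyl_dE (a d : ι → A) (hdd : ∀ i j, d i * d j = d j * d i)
    (hda : ∀ i j, d i * a j = a j * d i + if i = j then 1 else 0) (j : ι) :
    d j * (∑ i, a i * d i) = (∑ i, a i * d i) * d j + d j := by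
  have h : ∀ i, d j * (a i * d i) = a i * d i * d j + if j = i then d i else 0 := by
    intro i
    rw [← mul_assoc, hda, add_mul, mul_assoc, hdd j i, mul_assoc]
    split_ifs <;> simp
  rw [Finset.sum_mul, Finset.mul_sum, Finset.sum_congr rfl (fun i _ => h i),
    Finset.sum_add_distrib]
  simp

theorem weyl_Da (a d : ι → A)
    (hda : ∀ i j, d i * a j = a j * d i + if i = j then 1 else 0) (j : ι) :
    (∑ i, d i * d i) * a j = a j * (∑ i, d i * d i) + 2 * d j := by
  have h : ∀ i, d i * d i * a j = a j * (d i * d i) + if i = j then 2 * d i else 0 := by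
    intro i
    rw [mul_assoc, hda, mul_add, ← mul_assoc, hda, add_mul]
    split_ifs
    · simp only [mul_one, one_mul]; noncomm_ring
    · simp [mul_assoc]
  rw [Finset.sum_mul, Finset.mul_sum, Finset.sum_congr rfl (fun i _ => h i),
    Finset.sum_add_distrib]
  simp

theorem weyl_Er (a d : ι → A) (haa : ∀ i j, a i * a j = a j * a i)
    (hda : ∀ i j, d i * a j = a j * d i + if i = j then 1 else 0) :
    (∑ i, a i * d i) * (∑ i, a i * a i) =
      (∑ i, a i * a i) * (∑ i, a i * d i) + 2 * (∑ i, a i * a i) := by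
  have h := weyl_Ea a d haa hda
  generalize (∑ i, a i * d i) = E at *
  simp only [Finset.mul_sum, Finset.sum_mul, ← Finset.sum_add_distrib]
  refine Finset.sum_congr rfl fun j _ => ?_
  rw [← mul_assoc, h, add_mul, mul_assoc, h]
  noncomm_ring

theorem weyl_DE (a d : ι → A) (hdd : ∀ i j, d i * d j = d j * d i)
    (hda : ∀ i j, d i * a j = a j * d i + if i = j then 1 else 0) :
    (∑ i, d i * d i) * (∑ i, a i * d i) =
      (∑ i, a i * d i) * (∑ i, d i * d i) + 2 * (∑ i, d i * d i) := by
  have h := weyl_dE a d hdd hda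
  generalize (∑ i, a i * d i) = E at *
  simp only [Finset.mul_sum, Finset.sum_mul, ← Finset.sum_add_distrib]
  refine Finset.sum_congr rfl fun j _ => ?_
  rw [mul_assoc, h, mul_add, ← mul_assoc, h]
  noncomm_ring

theorem weyl_Dr (a d : ι → A)
    (hda : ∀ i j, d i * a j = a j * d i + if i = j then 1 else 0) :
    (∑ i, d i * d i) * (∑ i, a i * a i) =
      (∑ i, a i * a i) * (∑ i, d i * d i) + 4 * (∑ i, a i * d i)
        + 2 * (Fintype.card ι : A) := by
  have h := weyl_Da a d hda
  have hc : (2 * (Fintype.card ι : A)) = ∑ i : ι, (2 : A) := by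
    simp [Nat.cast_comm]
  rw [hc]
  generalize (∑ i, d i * d i) = D at *
  simp only [Finset.mul_sum, Finset.sum_mul, ← Finset.sum_add_distrib]
  refine Finset.sum_congr rfl fun j _ => ?_
  have h2 : d j * a j = a j * d j + 1 := by simpa using hda j j
  rw [← mul_assoc, h, add_mul, mul_assoc, h, mul_assoc 2, h2]
  noncomm_ring
  simp

end helpers

theorem rx2_eq (p q : ℕ) : rx2 p q = ∑ i, xop p q i * xop p q i := by
  apply LinearMap.ext; intro f
  simp [rx2, xop, Finset.sum_mul, pow_two, mul_assoc, LinearMap.sum_apply]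

theorem ry2_eq (p q : ℕ) : ry2 p q = ∑ i, yop p q i * yop p q i := by
  apply LinearMap.ext; intro f
  simp [ry2, yop, Finset.sum_mul, pow_two, mul_assoc, LinearMap.sum_apply]

theorem pd_comm {σ : Type*} (i j : σ) (f : MvPolynomial σ ℂ) :
    MvPolynomial.pderiv i (MvPolynomial.pderiv j f)
      = MvPolynomial.pderiv j (MvPolynomial.pderiv i f) := by
  classical
  have h : ⁅MvPolynomial.pderiv (R := ℂ) i, MvPolynomial.pderiv (R := ℂ) j⁆ = 0 := by
    apply MvPolynomial.derivation_ext
    intro k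
    simp [Derivation.commutator_apply, MvPolynomial.pderiv_X, Pi.single_apply, apply_ite]
  have := congrArg (fun D => D f) h
  simpa [Derivation.commutator_apply, sub_eq_zero] using this

theorem xx (p q : ℕ) (i j) : xop p q i * xop p q j = xop p q j * xop p q i := by
  apply LinearMap.ext; intro f; simp [xop, mul_left_comm]
theorem yy (p q : ℕ) (i j) : yop p q i * yop p q j = yop p q j * yop p q i := by
  apply LinearMap.ext; intro f; simp [yop, mul_left_comm]
theorem xy (p q : ℕ) (i j) : Commute (xop p q i) (yop p q j) := by
  apply LinearMap.ext; intro f; simp [xop, yop, mul_left_comm]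
theorem dxdx (p q : ℕ) (i j) : dx p q i * dx p q j = dx p q j * dx p q i := by
  apply LinearMap.ext; intro f; simp [dx, pd_comm (Sum.inl i)]
theorem dydy (p q : ℕ) (i j) : dy p q i * dy p q j = dy p q j * dy p q i := by
  apply LinearMap.ext; intro f; simp [dy, pd_comm (Sum.inr i)]
theorem dxdy (p q : ℕ) (i j) : Commute (dx p q i) (dy p q j) := by
  apply LinearMap.ext; intro f; simp [dx, dy, pd_comm (Sum.inl i)]
theorem dxx (p q : ℕ) (i j) :
    dx p q i * xop p q j = xop p q j * dx p q i + if i = j then 1 else 0 := by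
  apply LinearMap.ext; intro f
  by_cases h : i = j
  · subst h; simp [dx, xop]
  · simp [dx, xop, h, MvPolynomial.pderiv_X, Ne.symm h]
theorem dyy (p q : ℕ) (i j) :
    dy p q i * yop p q j = yop p q j * dy p q i + if i = j then 1 else 0 := by
  apply LinearMap.ext; intro f
  by_cases h : i = j
  · subst h; simp [dy, yop]
  · simp [dy, yop, h, MvPolynomial.pderiv_X, Ne.symm h]
theorem dxy (p q : ℕ) (i j) : Commute (dx p q i) (yop p q j) := by
  apply LinearMap.ext; intro f; simp [dx, yop, MvPolynomial.pderiv_X]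
theorem xdy (p q : ℕ) (i j) : Commute (xop p q i) (dy p q j) := by
  apply LinearMap.ext; intro f; simp [xop, dy, MvPolynomial.pderiv_X]

theorem comm_sums {A ι κ : Type*} [Ring A] [Fintype ι] [Fintype κ] (a b : ι → A) (c d : κ → A)
    (h1 : ∀ i j, Commute (a i) (c j)) (h2 : ∀ i j, Commute (a i) (d j))
    (h3 : ∀ i j, Commute (b i) (c j)) (h4 : ∀ i j, Commute (b i) (d j)) :
    (∑ i, a i * b i) * (∑ j, c j * d j) = (∑ j, c j * d j) * (∑ i, a i * b i) :=
  Commute.sum_left _ _ _ fun i _ => Commute.sum_right _ _ _ fun j _ =>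
    ((h1 i j).mul_right (h2 i j)).mul_left ((h3 i j).mul_right (h4 i j))

theorem alg_final {A : Type*} [Ring A] [Algebra ℂ A] (rx ry Ex Ey Dx Dy : A) (p q : ℂ)
    (a1 : Ex * rx = rx * Ex + (2 : ℂ) • rx)
    (a2 : Dx * Ex = Ex * Dx + (2 : ℂ) • Dx)
    (a3 : Dx * rx = rx * Dx + (4 : ℂ) • Ex + (2 : ℂ) • p • (1 : A))
    (b1 : Ey * ry = ry * Ey + (2 : ℂ) • ry)
    (b2 : Dy * Ey = Ey * Dy + (2 : ℂ) • Dy)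
    (b3 : Dy * ry = ry * Dy + (4 : ℂ) • Ey + (2 : ℂ) • q • (1 : A))
    (c1 : Ex * ry = ry * Ex) (c2 : Ex * Dy = Dy * Ex) (c3 : Dx * Ey = Ey * Dx)
    (c4 : rx * Ey = Ey * rx) (c5 : Dx * Dy = Dy * Dx) (c6 : rx * ry = ry * rx) :
    let H : A := -Ex - (p / 2) • 1 + Ey + (q / 2) • 1
    let P : A := -((1 : ℂ) / 2) • (Dx + ry)
    let M : A := ((1 : ℂ) / 2) • (rx + Dy)
    H * P - P * H = (2 : ℂ) • P ∧ H * M - M * H = (-2 : ℂ) • M ∧ P * M - M * P = H := by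
  intro H P M
  simp only [H, P, M]
  refine ⟨?_, ?_, ?_⟩ <;>
  · simp only [mul_add, add_mul, sub_mul, mul_sub, neg_mul, mul_neg, smul_mul_assoc,
      mul_smul_comm, mul_one, one_mul, smul_add, a1, a2, a3, b1, b2, b3, c1, c2, c3, c4, c5, c6]
    module

theorem stmt_4 (p q : ℕ) (hp : 1 ≤ p) (hq : 1 ≤ q) :
    Hop p q * Xplus p q - Xplus p q * Hop p q = (2 : ℂ) • Xplus p q ∧
    Hop p q * Xminus p q - Xminus p q * Hop p q = (-2 : ℂ) • Xminus p q ∧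
    Xplus p q * Xminus p q - Xminus p q * Xplus p q = Hop p q := by
  have a1 := weyl_Er _ _ (xx p q) (dxx p q)
  have a2 := weyl_DE _ _ (dxdx p q) (dxx p q)
  have a3 := weyl_Dr _ _ (dxx p q)
  have b1 := weyl_Er _ _ (yy p q) (dyy p q)
  have b2 := weyl_DE _ _ (dydy p q) (dyy p q)
  have b3 := weyl_Dr _ _ (dyy p q)
  have c1 := comm_sums _ _ _ _ (xy p q) (xy p q) (dxy p q) (dxy p q)
  have c2 := comm_sums _ _ _ _ (xdy p q) (xdy p q) (dxdy p q) (dxdy p q)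
  have c3 := comm_sums _ _ _ _ (dxy p q) (dxdy p q) (dxy p q) (dxdy p q)
  have c4 := comm_sums _ _ _ _ (xy p q) (xdy p q) (xy p q) (xdy p q)
  have c5 := comm_sums _ _ _ _ (dxdy p q) (dxdy p q) (dxdy p q) (dxdy p q)
  have c6 := comm_sums _ _ _ _ (xy p q) (xy p q) (xy p q) (xy p q)
  have hcp : ∀ n : ℕ, (n : Module.End ℂ (Rpq p q)) = (n : ℂ) • 1 := by
    intro n; rw [← nsmul_one, Nat.cast_smul_eq_nsmul]
  have n2 : ∀ Z : Module.End ℂ (Rpq p q), 2 * Z = (2 : ℂ) • Z := by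
    intro Z; rw [two_mul, two_smul]
  have n4 : ∀ Z : Module.End ℂ (Rpq p q), 4 * Z = (4 : ℂ) • Z := by
    intro Z
    rw [show (4 : Module.End ℂ (Rpq p q)) = 2 * 2 by norm_num, mul_assoc, n2, n2, smul_smul]
    norm_num
  simp only [Fintype.card_fin, hcp, n2, n4] at a1 a2 a3 b1 b2 b3
  unfold Hop Xplus Xminus
  rw [rx2_eq, ry2_eq]
  unfold Eop_x Eop_y Δx Δy
  generalize (∑ i, xop p q i * xop p q i) = rx at *
  generalize (∑ i, yop p q i * yop p q i) = ry at *
  generalize (∑ i, xop p q i * dx p q i) = Ex at *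
  generalize (∑ i, yop p q i * dy p q i) = Ey at *
  generalize (∑ i, dx p q i * dx p q i) = Dx at *
  generalize (∑ i, dy p q i * dy p q i) = Dy at *
  exact alg_final rx ry Ex Ey Dx Dy p q a1 a2 a3 b1 b2 b3 c1 c2 c3 c4 c5 c6
end

section
/- Let n ≥ 1, let h be a polynomial on ℝⁿ that is homogeneous of degree d and harmonic (Σ_{i=1}^n ∂²h/∂x_i² = 0), and let φ : ℝ → ℂ be twice continuously differentiable. Then for every x ∈ ℝⁿ, Δ( h·(φ∘r²) )(x) = (4d + 2n)·h(x)·φ'(‖x‖²) + 4‖x‖²·h(x)·φ''(‖x‖²), where Δ = Σ_{i=1}^n ∂²/∂x_i² is the Laplacian (sum of second partial derivatives) and r²(x) = ‖x‖² = Σ_i x_i². -/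
/-- The Laplacian `Δf = Σ_{i=1}^n ∂²f/∂x_i²` of a function `f : ℝⁿ → ℂ`, as the sum of
second partial derivatives in the coordinate directions. -/
noncomputable def lap (n : ℕ) (f : EuclideanSpace ℝ (Fin n) → ℂ)
    (x : EuclideanSpace ℝ (Fin n)) : ℂ :=
  ∑ i : Fin n,
    fderiv ℝ (fun y => fderiv ℝ f y (EuclideanSpace.single i 1)) x (EuclideanSpace.single i 1)

open MvPolynomial in
lemma aux_poly (n : ℕ) (p : MvPolynomial (Fin n) ℝ) (i : Fin n) :
    ∀ x : EuclideanSpace ℝ (Fin n),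
    DifferentiableAt ℝ (fun y : EuclideanSpace ℝ (Fin n) => eval (fun j => y j) p) x ∧
    fderiv ℝ (fun y : EuclideanSpace ℝ (Fin n) => eval (fun j => y j) p) x
      (EuclideanSpace.single i 1) = eval (fun j => x j) (pderiv i p) := by
  intro x
  induction p using MvPolynomial.induction_on with
  | C a => simp
  | add p q hp hq =>
    simp only [map_add]
    refine ⟨hp.1.add hq.1, ?_⟩
    rw [fderiv_fun_add hp.1 hq.1]
    simp [hp.2, hq.2]
  | mul_X p j hp =>
    have hj : HasFDerivAt (fun y : EuclideanSpace ℝ (Fin n) => y j)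
        (EuclideanSpace.proj j : EuclideanSpace ℝ (Fin n) →L[ℝ] ℝ) x :=
      (EuclideanSpace.proj j : EuclideanSpace ℝ (Fin n) →L[ℝ] ℝ).hasFDerivAt
    simp only [map_mul, eval_X]
    refine ⟨hp.1.mul hj.differentiableAt, ?_⟩
    rw [fderiv_fun_mul hp.1 hj.differentiableAt, hj.fderiv]
    simp [hp.2, Derivation.leibniz, pderiv_X, Pi.single_apply]
    by_cases hij : i = j
    · subst hij; simp
    · simp [hij, Ne.symm hij]

open MvPolynomial in
lemma aux_key (n : ℕ) (p : MvPolynomial (Fin n) ℝ) (i : Fin n) (φ : ℝ → ℂ)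
    (hφ : Differentiable ℝ φ) (x : EuclideanSpace ℝ (Fin n)) :
    DifferentiableAt ℝ (fun y : EuclideanSpace ℝ (Fin n) =>
      ((eval (fun j => y j) p : ℝ) : ℂ) * φ (‖y‖ ^ 2)) x ∧
    fderiv ℝ (fun y : EuclideanSpace ℝ (Fin n) =>
      ((eval (fun j => y j) p : ℝ) : ℂ) * φ (‖y‖ ^ 2)) x (EuclideanSpace.single i 1) =
      ((eval (fun j => x j) (pderiv i p) : ℝ) : ℂ) * φ (‖x‖ ^ 2) +
      ((eval (fun j => x j) (2 * X i * p) : ℝ) : ℂ) * deriv φ (‖x‖ ^ 2) := by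
  obtain ⟨h1, h2⟩ := aux_poly n p i x
  have h3 := Complex.ofRealCLM.hasFDerivAt.comp x h1.hasFDerivAt
  have h4 := (hasStrictFDerivAt_norm_sq x).hasFDerivAt
  have h5 := (hφ (‖x‖ ^ 2)).hasDerivAt.hasFDerivAt.comp x h4
  have h6 := h3.mul h5
  refine ⟨h6.differentiableAt, ?_⟩
  have h7 := h6.fderiv
  have h8 := congrArg (fun L => L (EuclideanSpace.single i 1)) h7
  refine Eq.trans h8 ?_
  simp [h2, EuclideanSpace.inner_single_right]
  ring

theorem stmt_7 (n d : ℕ) (hn : 1 ≤ n) (h : MvPolynomial (Fin n) ℝ)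
    (hhom : h.IsHomogeneous d)
    (hharm : ∑ i : Fin n, MvPolynomial.pderiv i (MvPolynomial.pderiv i h) = 0)
    (φ : ℝ → ℂ) (hφ : ContDiff ℝ 2 φ) (x : EuclideanSpace ℝ (Fin n)) :
    lap n (fun y => ((MvPolynomial.eval (fun i => y i) h : ℝ) : ℂ) * φ (‖y‖ ^ 2)) x =
      ((4 * d + 2 * n : ℕ) : ℂ) * ((MvPolynomial.eval (fun i => x i) h : ℝ) : ℂ)
          * deriv φ (‖x‖ ^ 2)
        + 4 * ((‖x‖ ^ 2 : ℝ) : ℂ) * ((MvPolynomial.eval (fun i => x i) h : ℝ) : ℂ)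
          * deriv (deriv φ) (‖x‖ ^ 2) := by
  have hd : Differentiable ℝ φ := hφ.differentiable (by norm_num)
  have hd' : Differentiable ℝ (deriv φ) := by
    have : ContDiff ℝ 1 (deriv φ) := (contDiff_succ_iff_deriv.1 (by simpa [one_add_one_eq_two] using hφ : ContDiff ℝ (1+1) φ)).2.2
    exact this.differentiable (by norm_num)
  have e1 : ∀ i : Fin n, fderiv ℝ (fun y => fderiv ℝ (fun y : EuclideanSpace ℝ (Fin n) => ((MvPolynomial.eval (fun i => y i) h : ℝ) : ℂ) * φ (‖y‖ ^ 2)) y (EuclideanSpace.single i 1)) x (EuclideanSpace.single i 1)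
      = ((MvPolynomial.eval (fun j => x j) (MvPolynomial.pderiv i (MvPolynomial.pderiv i h)) : ℝ) : ℂ) * φ (‖x‖ ^ 2)
       + (4 * ((MvPolynomial.eval (fun j => x j) (MvPolynomial.X i * MvPolynomial.pderiv i h) : ℝ) : ℂ)
          + 2 * ((MvPolynomial.eval (fun j => x j) h : ℝ) : ℂ)) * deriv φ (‖x‖ ^ 2)
       + 4 * ((x i ^ 2 : ℝ) : ℂ) * ((MvPolynomial.eval (fun i => x i) h : ℝ) : ℂ)
          * deriv (deriv φ) (‖x‖ ^ 2) := by
    intro i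
    have := funext fun y => (aux_key n h i φ hd y).2
    rw [this]
    obtain ⟨a1, a2⟩ := aux_key n (MvPolynomial.pderiv i h) i φ hd x
    obtain ⟨b1, b2⟩ := aux_key n (2 * MvPolynomial.X i * h) i (deriv φ) hd' x
    rw [fderiv_fun_add a1 b1, ContinuousLinearMap.add_apply, a2, b2]
    have h2 : MvPolynomial.pderiv i (2 : MvPolynomial (Fin n) ℝ) = 0 :=
      (MvPolynomial.pderiv i).map_natCast 2
    simp [Derivation.leibniz, h2]
    ring
  have hE := congrArg (fun p => ((MvPolynomial.eval (fun j => x j) p : ℝ) : ℂ)) hhom.sum_X_mul_pderiv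
  have hH := congrArg (fun p => ((MvPolynomial.eval (fun j => x j) p : ℝ) : ℂ)) hharm
  simp only [map_sum, Complex.ofReal_sum, map_zero, Complex.ofReal_zero, map_nsmul] at hE hH
  have hN : ((‖x‖ ^ 2 : ℝ) : ℂ) = ∑ i, ((x i ^ 2 : ℝ) : ℂ) := by
    rw [EuclideanSpace.real_norm_sq_eq, Complex.ofReal_sum]
  rw [lap, Finset.sum_congr rfl fun i _ => e1 i]
  simp only [Finset.sum_add_distrib, ← Finset.sum_mul, ← Finset.mul_sum]
  rw [hE, hH, hN]
  simp only [nsmul_eq_mul, Finset.sum_const, Finset.card_univ, Fintype.card_fin]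
  push_cast
  ring
end

section
/- Let h₁ be a harmonic polynomial on ℝ^p homogeneous of degree k, let h₂ be a harmonic polynomial on ℝ^q homogeneous of degree l, set κ₊ = k + p/2 and κ₋ = l + q/2, and let μ ∈ ℕ. Then the smooth function f(x,y) = h₁(x)·h₂(y)·ρ_y^μ·Ψ_{κ₊}(ρ_x ρ_y) on ℝ^p × ℝ^q satisfies H f = (−κ₊ + κ₋ + 2μ)·f and X⁺ f = 0 everywhere; i.e. f is a highest weight vector of weight λ = −κ₊ + κ₋ + 2μ for the 𝔰𝔩₂-action. -/
noncomputable section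

/-- Points `(x, y) ∈ ℝ^p × ℝ^q`. -/
abbrev Pt (p q : ℕ) := (Fin p → ℝ) × (Fin q → ℝ)

/-- The partial derivative `∂_{x_i}` of a function on `ℝ^p × ℝ^q`. -/
def pdx (p q : ℕ) (i : Fin p) (f : Pt p q → ℂ) : Pt p q → ℂ :=
  fun z => fderiv ℝ f z ((Pi.single i 1 : Fin p → ℝ), (0 : Fin q → ℝ))

/-- The partial derivative `∂_{y_j}` of a function on `ℝ^p × ℝ^q`. -/
def pdy (p q : ℕ) (j : Fin q) (f : Pt p q → ℂ) : Pt p q → ℂ :=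
  fun z => fderiv ℝ f z ((0 : Fin p → ℝ), (Pi.single j 1 : Fin q → ℝ))

/-- `ρ_x = r_x²/2 = (Σ_i x_i²)/2`. -/
def rhox (p q : ℕ) (z : Pt p q) : ℝ := (∑ i, z.1 i ^ 2) / 2

/-- `ρ_y = r_y²/2 = (Σ_j y_j²)/2`. -/
def rhoy (p q : ℕ) (z : Pt p q) : ℝ := (∑ j, z.2 j ^ 2) / 2

/-- The operator `H = −E_x − p/2 + E_y + q/2`. -/
def HOp (p q : ℕ) (f : Pt p q → ℂ) : Pt p q → ℂ := fun z =>
  -(∑ i, ((z.1 i : ℝ) : ℂ) * pdx p q i f z) - ((p : ℂ) / 2) * f z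
    + (∑ j, ((z.2 j : ℝ) : ℂ) * pdy p q j f z) + ((q : ℂ) / 2) * f z

/-- The operator `X⁺ = −(1/2)(Δ_x + r_y²)`. -/
def XpOp (p q : ℕ) (f : Pt p q → ℂ) : Pt p q → ℂ := fun z =>
  -(1 / 2 : ℂ) * ((∑ i, pdx p q i (pdx p q i f) z) + (((∑ j, z.2 j ^ 2 : ℝ)) : ℂ) * f z)

/-- The operator `X⁻ = (1/2)(r_x² + Δ_y)`. -/
def XmOp (p q : ℕ) (f : Pt p q → ℂ) : Pt p q → ℂ := fun z =>
  (1 / 2 : ℂ) * ((((∑ i, z.1 i ^ 2 : ℝ)) : ℂ) * f z + ∑ j, pdy p q j (pdy p q j f) z)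

/-- Rising factorial `(α)ₙ = α(α+1)⋯(α+n−1)` for a complex number `α`. -/
def rising (α : ℂ) : ℕ → ℂ
  | 0 => 1
  | n + 1 => rising α n * (α + n)

/-- Falling factorial `⟨β⟩ₙ = β(β−1)⋯(β−n+1)` for a complex number `β`. -/
def falling (β : ℂ) : ℕ → ℂ
  | 0 => 1
  | n + 1 => falling β n * (β - n)

/-- `Ψ_α(u) = Σ_{n=0}^∞ ((−1)ⁿ/(n!·(α)ₙ))·uⁿ`. -/
def Psi (α : ℂ) (u : ℂ) : ℂ :=
  ∑' n : ℕ, ((-1) ^ n / ((n.factorial : ℂ) * rising α n)) * u ^ n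

/-- `ψ_α(x,y) = Ψ_α(ρ_x ρ_y)`. -/
def psiF (p q : ℕ) (α : ℂ) (z : Pt p q) : ℂ :=
  Psi α (((rhox p q z * rhoy p q z : ℝ)) : ℂ)

end


noncomputable section

namespace S12

lemma rising_bound (α : ℂ) (hα : 0 < α.re) (n : ℕ) : min α.re 1 ≤ ‖rising α n‖ := by
  have key : ∀ n : ℕ, min α.re 1 ≤ ‖rising α (n+1)‖ := by
    intro n
    induction n with
    | zero =>
      simp only [rising, Nat.cast_zero, add_zero, one_mul]
      exact (min_le_left _ _).trans (Complex.re_le_norm α)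
    | succ n ih =>
      rw [rising, norm_mul]
      have h1 : (1:ℝ) ≤ ‖α + ((n+1 : ℕ):ℂ)‖ := by
        refine le_trans ?_ (Complex.re_le_norm _)
        simp only [Complex.add_re, Complex.natCast_re]
        push_cast
        have : (0:ℝ) ≤ n := Nat.cast_nonneg n
        linarith
      calc _ ≤ _ := ih
        _ ≤ _ := le_mul_of_one_le_right (norm_nonneg _) h1
  cases n with
  | zero => simp [rising]
  | succ n => exact key n

lemma rising_ne (α : ℂ) (hα : 0 < α.re) (n : ℕ) : rising α n ≠ 0 := by
  have := rising_bound α hα n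
  have h : 0 < min α.re 1 := lt_min hα one_pos
  exact norm_pos_iff.1 (h.trans_le this)

lemma rising_succ' (α : ℂ) (n : ℕ) : rising α (n+1) = α * rising (α+1) n := by
  induction n with
  | zero => simp [rising]
  | succ n ih =>
    rw [rising, ih, rising]; push_cast; ring

def cf (α : ℂ) (n : ℕ) : ℂ := (-1) ^ n / ((n.factorial : ℂ) * rising α n)

lemma cf_norm (α : ℂ) (hα : 0 < α.re) (n : ℕ) :
    ‖cf α n‖ ≤ (min α.re 1)⁻¹ * (n.factorial : ℝ)⁻¹ := by
  have h : 0 < min α.re 1 := lt_min hα one_pos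
  rw [cf, norm_div, norm_mul, norm_pow, norm_neg, norm_one, one_pow, one_div, mul_inv,
    Complex.norm_natCast, mul_comm]
  gcongr
  exact rising_bound α hα n

lemma cf_summable (α : ℂ) (hα : 0 < α.re) (u : ℂ) : Summable fun n => cf α n * u ^ n := by
  refine Summable.of_norm_bounded
    (g := fun n : ℕ => (min α.re 1)⁻¹ * (‖u‖ ^ n / (n.factorial : ℝ)))
    ((Real.summable_pow_div_factorial ‖u‖).mul_left _) ?_
  intro n
  rw [norm_mul, norm_pow]
  calc _ ≤ (min α.re 1)⁻¹ * (n.factorial : ℝ)⁻¹ * ‖u‖ ^ n := by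
        gcongr; exact cf_norm α hα n
    _ = _ := by ring

lemma Psi_eq (α u : ℂ) : Psi α u = ∑' n, cf α n * u ^ n := rfl

lemma cf_succ (α : ℂ) (hα : 0 < α.re) (n : ℕ) :
    cf α (n+1) * ((n:ℂ)+1) = (-1/α) * cf (α+1) n := by
  have h0 : α ≠ 0 := by rintro rfl; simp at hα
  have h1 := rising_ne (α+1) (by simp; linarith) n
  have h2 : (n.factorial : ℂ) ≠ 0 := by exact_mod_cast n.factorial_ne_zero
  have h3 : (n:ℂ)+1 ≠ 0 := by exact_mod_cast n.succ_ne_zero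
  rw [cf, cf, rising_succ', Nat.factorial_succ]
  push_cast
  field_simp
  ring

lemma Psi_deriv (α : ℂ) (hα : 0 < α.re) (u : ℂ) :
    HasDerivAt (Psi α) ((-1/α) * Psi (α+1) u) u := by
  have hα1 : 0 < (α+1).re := by simp; linarith
  set R : ℝ := ‖u‖ + 1
  have hR : 0 < R := by positivity
  have h : 0 < min α.re 1 := lt_min hα one_pos
  have hs : Summable (fun n : ℕ => (min α.re 1)⁻¹ * (n.factorial : ℝ)⁻¹ * (n * R ^ (n-1))) := by
    rw [← summable_nat_add_iff 1]
    refine ((Real.summable_pow_div_factorial R).mul_left (min α.re 1)⁻¹).congr ?_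
    intro n
    have h2 : (n.factorial : ℝ) ≠ 0 := by exact_mod_cast n.factorial_ne_zero
    have h3 : (n:ℝ)+1 ≠ 0 := by exact_mod_cast n.succ_ne_zero
    rw [Nat.factorial_succ]
    push_cast
    try simp only [Nat.add_sub_cancel]
    field_simp
  have hd := hasDerivAt_tsum_of_isPreconnected (𝕜 := ℂ) (g := fun n (y:ℂ) => cf α n * y ^ n)
    (g' := fun n y => cf α n * (n * y ^ (n-1))) (t := Metric.ball 0 R) (y₀ := 0) (y := u) hs
    Metric.isOpen_ball (convex_ball 0 R).isPreconnected
    (fun n y _ => (hasDerivAt_pow n y).const_mul _)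
    (fun n y hy => by
      rw [norm_mul, norm_mul, norm_pow, Complex.norm_natCast]
      have : ‖y‖ ≤ R := by simpa using (Metric.mem_ball.1 hy).le
      gcongr
      exact cf_norm α hα n)
    (by simpa using hR) (cf_summable α hα 0) (by simp [R])
  have he : (∑' n, cf α n * (n * u ^ (n-1))) = (-1/α) * Psi (α+1) u := by
    rw [Psi_eq, ← tsum_mul_left, tsum_eq_zero_add']
    · simp only [Nat.cast_zero, zero_mul, mul_zero, zero_add]
      refine tsum_congr fun n => ?_
      have := cf_succ α hα n
      simp only [Nat.add_sub_cancel]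
      push_cast
      linear_combination u^n * this
    · refine ((cf_summable (α+1) hα1 u).mul_left (-1/α)).congr ?_
      intro n
      have := cf_succ α hα n
      simp only [Nat.add_sub_cancel]
      push_cast
      linear_combination -u^n * this
  rw [he] at hd
  exact hd

lemma Psi_rec (α : ℂ) (hα : 0 < α.re) (u : ℂ) :
    u * ((-1/α) * ((-1/(α+1)) * Psi (α+2) u)) = Psi (α+1) u - Psi α u := by
  have hα1 : 0 < (α+1).re := by simp; linarith
  have hα2 : 0 < (α+1+1).re := by simp; linarith
  have e : α + 2 = α + 1 + 1 := by ring
  rw [e]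
  simp only [Psi_eq]
  rw [← Summable.tsum_sub (cf_summable _ hα1 u) (cf_summable _ hα u),
    tsum_eq_zero_add' (f := fun n => cf (α+1) n * u ^ n - cf α n * u ^ n)]
  · rw [← tsum_mul_left, ← tsum_mul_left, ← tsum_mul_left]
    simp only [cf, rising, pow_zero, Nat.factorial_zero, sub_self, zero_add]
    refine tsum_congr fun n => ?_
    have h0 : α ≠ 0 := by rintro rfl; simp at hα
    have h01 : α+1 ≠ 0 := by intro h; rw [h] at hα1; simp at hα1
    have h1 := rising_ne (α+1) hα1 n
    have h1' := rising_ne (α+1+1) hα2 n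
    have h2 : (n.factorial : ℂ) ≠ 0 := by exact_mod_cast n.factorial_ne_zero
    have h3 : (n:ℂ)+1 ≠ 0 := by exact_mod_cast n.succ_ne_zero
    have h4 : α + 1 + n ≠ 0 := by
      intro h
      have := congrArg Complex.re h
      simp at this
      have : (0:ℝ) ≤ n := Nat.cast_nonneg n
      linarith
    have r1 : rising α n * (α + n) = α * rising (α+1) n := rising_succ' α n
    have r2 : rising (α+1) n * (α + 1 + n) = (α+1) * rising (α+1+1) n := rising_succ' (α+1) n
    have r3 : rising (α+1+1) n = rising (α+1) n * (α+1+n) / (α+1) := by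
      rw [r2]; field_simp
    rw [r1, r3, Nat.factorial_succ]
    push_cast
    field_simp
    ring
  · exact ((summable_nat_add_iff 1).2 ((cf_summable _ hα1 u).sub (cf_summable _ hα u)))

/-- directional-derivative predicate -/
def HD {p q : ℕ} (f : Pt p q → ℂ) (z : Pt p q) (d : Pt p q → ℂ) : Prop :=
  ∃ L : Pt p q →L[ℝ] ℂ, HasFDerivAt f L z ∧ ∀ v, L v = d v

variable {p q : ℕ}

lemma HD.diff {f : Pt p q → ℂ} {z d} (h : HD f z d) : DifferentiableAt ℝ f z := by
  obtain ⟨L, h, _⟩ := h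
  exact h.differentiableAt

lemma HD.fderiv {f : Pt p q → ℂ} {z d} (h : HD f z d) (v) : fderiv ℝ f z v = d v := by
  obtain ⟨L, h, h'⟩ := h
  rw [h.fderiv, h']

lemma HD.congr {f : Pt p q → ℂ} {z d d'} (h : HD f z d) (hd : ∀ v, d v = d' v) : HD f z d' := by
  obtain ⟨L, h, h'⟩ := h
  exact ⟨L, h, fun v => (h' v).trans (hd v)⟩

lemma HD.add {f g : Pt p q → ℂ} {z d e} (hf : HD f z d) (hg : HD g z e) :
    HD (fun z => f z + g z) z (fun v => d v + e v) := by
  obtain ⟨L, h, h'⟩ := hf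
  obtain ⟨M, k, k'⟩ := hg
  exact ⟨L + M, h.add k, fun v => by simp [h', k']⟩

lemma HD.mul {f g : Pt p q → ℂ} {z d e} (hf : HD f z d) (hg : HD g z e) :
    HD (fun z => f z * g z) z (fun v => f z * e v + g z * d v) := by
  obtain ⟨L, h, h'⟩ := hf
  obtain ⟨M, k, k'⟩ := hg
  exact ⟨f z • M + g z • L, h.mul k, fun v => by simp [h', k']⟩

lemma HD.const (c : ℂ) (z : Pt p q) : HD (fun _ => c) z (fun _ => 0) :=
  ⟨0, hasFDerivAt_const c z, fun v => by simp⟩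

lemma HD.comp {f : Pt p q → ℂ} {z d} {g : ℂ → ℂ} {g' : ℂ} (hg : HasDerivAt g g' (f z))
    (hf : HD f z d) : HD (fun z => g (f z)) z (fun v => g' * d v) := by
  obtain ⟨L, h, h'⟩ := hf
  exact ⟨_, hg.comp_hasFDerivAt z h, fun v => by simp [h']⟩

lemma HD.coordx (i : Fin p) (z : Pt p q) :
    HD (fun z : Pt p q => ((z.1 i : ℝ) : ℂ)) z (fun v => ((v.1 i : ℝ) : ℂ)) :=
  ⟨Complex.ofRealCLM.comp ((ContinuousLinearMap.proj i).comp
    (ContinuousLinearMap.fst ℝ (Fin p → ℝ) (Fin q → ℝ))),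
    (Complex.ofRealCLM.comp ((ContinuousLinearMap.proj i).comp
    (ContinuousLinearMap.fst ℝ (Fin p → ℝ) (Fin q → ℝ)))).hasFDerivAt, fun v => rfl⟩

lemma HD.coordy (i : Fin q) (z : Pt p q) :
    HD (fun z : Pt p q => ((z.2 i : ℝ) : ℂ)) z (fun v => ((v.2 i : ℝ) : ℂ)) :=
  ⟨Complex.ofRealCLM.comp ((ContinuousLinearMap.proj i).comp
    (ContinuousLinearMap.snd ℝ (Fin p → ℝ) (Fin q → ℝ))),
    (Complex.ofRealCLM.comp ((ContinuousLinearMap.proj i).comp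
    (ContinuousLinearMap.snd ℝ (Fin p → ℝ) (Fin q → ℝ)))).hasFDerivAt, fun v => rfl⟩

open MvPolynomial in
lemma HD.polyx (P : MvPolynomial (Fin p) ℝ) (z : Pt p q) :
    HD (fun z : Pt p q => ((eval z.1 P : ℝ) : ℂ)) z
      (fun v => ∑ i, ((v.1 i : ℝ) : ℂ) * ((eval z.1 (pderiv i P) : ℝ) : ℂ)) := by
  induction P using MvPolynomial.induction_on with
  | C a =>
    simp only [eval_C, pderiv_C, map_zero, Complex.ofReal_zero, mul_zero, Finset.sum_const_zero]
    exact HD.const _ _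
  | add P Q hP hQ =>
    simp only [map_add, Complex.ofReal_add, mul_add, Finset.sum_add_distrib]
    exact hP.add hQ
  | mul_X P i hP =>
    simp only [map_mul, Complex.ofReal_mul, eval_X]
    refine (hP.mul (HD.coordx i z)).congr fun v => ?_
    simp only [Derivation.leibniz, smul_eq_mul, map_add, map_mul, eval_X, pderiv_X,
      Complex.ofReal_add, Complex.ofReal_mul, mul_add, Finset.sum_add_distrib, Finset.mul_sum]
    congr 1
    · rw [Finset.sum_eq_single i]
      · simp; ring
      · intro b _ hb; simp [Pi.single_apply, hb.symm]
      · simp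
    · exact Finset.sum_congr rfl fun j _ => by ring

open MvPolynomial in
lemma HD.polyy (P : MvPolynomial (Fin q) ℝ) (z : Pt p q) :
    HD (fun z : Pt p q => ((eval z.2 P : ℝ) : ℂ)) z
      (fun v => ∑ i, ((v.2 i : ℝ) : ℂ) * ((eval z.2 (pderiv i P) : ℝ) : ℂ)) := by
  induction P using MvPolynomial.induction_on with
  | C a =>
    simp only [eval_C, pderiv_C, map_zero, Complex.ofReal_zero, mul_zero, Finset.sum_const_zero]
    exact HD.const _ _
  | add P Q hP hQ =>
    simp only [map_add, Complex.ofReal_add, mul_add, Finset.sum_add_distrib]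
    exact hP.add hQ
  | mul_X P i hP =>
    simp only [map_mul, Complex.ofReal_mul, eval_X]
    refine (hP.mul (HD.coordy i z)).congr fun v => ?_
    simp only [Derivation.leibniz, smul_eq_mul, map_add, map_mul, eval_X, pderiv_X,
      Complex.ofReal_add, Complex.ofReal_mul, mul_add, Finset.sum_add_distrib, Finset.mul_sum]
    congr 1
    · rw [Finset.sum_eq_single i]
      · simp; ring
      · intro b _ hb; simp [Pi.single_apply, hb.symm]
      · simp
    · exact Finset.sum_congr rfl fun j _ => by ring

lemma HD.rhox (z : Pt p q) : HD (fun z : Pt p q => ((rhox p q z : ℝ) : ℂ)) z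
    (fun v => ∑ i, ((v.1 i : ℝ) : ℂ) * ((z.1 i : ℝ) : ℂ)) := by
  have h := (HD.const (p := p) (q := q) (1/2) z).mul
    (HD.polyx (q := q) (∑ i : Fin p, MvPolynomial.X i ^ 2) z)
  have e : (fun z : Pt p q => ((_root_.rhox p q z : ℝ) : ℂ)) = fun z => 1/2 *
    ((MvPolynomial.eval z.1 (∑ i : Fin p, MvPolynomial.X i ^ 2) : ℝ) : ℂ) := by
    funext z; simp [_root_.rhox]; ring
  rw [e]
  refine h.congr fun v => ?_
  simp [MvPolynomial.pderiv_X, Pi.single_apply, Finset.mul_sum, Derivation.leibniz_pow]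
  try exact Finset.sum_congr rfl fun j _ => by ring

lemma HD.rhoy (z : Pt p q) : HD (fun z : Pt p q => ((rhoy p q z : ℝ) : ℂ)) z
    (fun v => ∑ i, ((v.2 i : ℝ) : ℂ) * ((z.2 i : ℝ) : ℂ)) := by
  have h := (HD.const (p := p) (q := q) (1/2) z).mul
    (HD.polyy (p := p) (∑ i : Fin q, MvPolynomial.X i ^ 2) z)
  have e : (fun z : Pt p q => ((_root_.rhoy p q z : ℝ) : ℂ)) = fun z => 1/2 *
    ((MvPolynomial.eval z.2 (∑ i : Fin q, MvPolynomial.X i ^ 2) : ℝ) : ℂ) := by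
    funext z; simp [_root_.rhoy]; ring
  rw [e]
  refine h.congr fun v => ?_
  simp [MvPolynomial.pderiv_X, Pi.single_apply, Finset.mul_sum, Derivation.leibniz_pow]
  try exact Finset.sum_congr rfl fun j _ => by ring

def FF (Q : MvPolynomial (Fin q) ℝ) (a : ℂ) (P : MvPolynomial (Fin p) ℝ) (m : ℕ) :
    Pt p q → ℂ := fun z =>
  ((MvPolynomial.eval z.1 P : ℝ) : ℂ) * ((MvPolynomial.eval z.2 Q : ℝ) : ℂ) *
        ((rhoy p q z : ℝ) : ℂ) ^ m * psiF p q a z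

open MvPolynomial in
lemma HD.FF (Q : MvPolynomial (Fin q) ℝ) (a : ℂ) (ha : 0 < a.re)
    (P : MvPolynomial (Fin p) ℝ) (m : ℕ) (z : Pt p q) :
    HD (FF Q a P m) z (fun v =>
      (∑ i, ((v.1 i : ℝ) : ℂ) * ((eval z.1 (pderiv i P) : ℝ) : ℂ)) *
        ((eval z.2 Q : ℝ) : ℂ) * ((_root_.rhoy p q z : ℝ) : ℂ) ^ m * psiF p q a z
      + ((eval z.1 P : ℝ) : ℂ) * (∑ i, ((v.2 i : ℝ) : ℂ) * ((eval z.2 (pderiv i Q) : ℝ) : ℂ))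
         * ((_root_.rhoy p q z : ℝ) : ℂ) ^ m * psiF p q a z
      + ((eval z.1 P : ℝ) : ℂ) * ((eval z.2 Q : ℝ) : ℂ) *
        (m * ((_root_.rhoy p q z : ℝ) : ℂ) ^ (m-1) *
          ∑ i, ((v.2 i : ℝ) : ℂ) * ((z.2 i : ℝ) : ℂ)) * psiF p q a z
      + ((eval z.1 P : ℝ) : ℂ) * ((eval z.2 Q : ℝ) : ℂ) * ((_root_.rhoy p q z : ℝ) : ℂ) ^ m *
        ((-1/a) * psiF p q (a+1) z *
          (((_root_.rhox p q z : ℝ) : ℂ) * (∑ i, ((v.2 i : ℝ) : ℂ) * ((z.2 i : ℝ) : ℂ))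
          + ((_root_.rhoy p q z : ℝ) : ℂ) * (∑ i, ((v.1 i : ℝ) : ℂ) * ((z.1 i : ℝ) : ℂ))))) := by
  have e : psiF p q a = fun z =>
      Psi a (((_root_.rhox p q z : ℝ) : ℂ) * ((_root_.rhoy p q z : ℝ) : ℂ)) := by
    funext z; simp [psiF]
  have h4 := HD.comp (Psi_deriv a ha _) ((HD.rhox z).mul (HD.rhoy z))
  rw [← e] at h4
  have h3 := HD.comp (hasDerivAt_pow m _) (HD.rhoy z)
  have h := (((HD.polyx P z).mul (HD.polyy Q z)).mul h3).mul h4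
  refine h.congr fun v => ?_
  simp only [psiF, Complex.ofReal_mul]
  ring

lemma sum_single' {n : ℕ} (i : Fin n) (g : Fin n → ℂ) :
    ∑ j, (((Pi.single i 1 : Fin n → ℝ) j : ℝ) : ℂ) * g j = g i := by
  rw [Finset.sum_eq_single i]
  · simp
  · intro b _ hb; simp [Pi.single_apply, hb]
  · simp

open MvPolynomial in
lemma pdx_FF (Q : MvPolynomial (Fin q) ℝ) (a : ℂ) (ha : 0 < a.re)
    (P : MvPolynomial (Fin p) ℝ) (m : ℕ) (i : Fin p) :
    pdx p q i (FF Q a P m) = fun z =>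
      FF Q a (pderiv i P) m z + (-1/a) * FF Q (a+1) (X i * P) (m+1) z := by
  funext z
  rw [pdx, (HD.FF Q a ha P m z).fderiv]
  simp only [FF, sum_single', Pi.zero_apply, Complex.ofReal_zero, zero_mul,
    Finset.sum_const_zero, mul_zero, map_mul, eval_X, Complex.ofReal_mul]
  ring

open MvPolynomial in
lemma pdx_pdx_FF (Q : MvPolynomial (Fin q) ℝ) (a : ℂ) (ha : 0 < a.re)
    (P : MvPolynomial (Fin p) ℝ) (m : ℕ) (i : Fin p) (z : Pt p q) :
    pdx p q i (pdx p q i (FF Q a P m)) z =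
      FF Q a (pderiv i (pderiv i P)) m z + (-1/a) * FF Q (a+1) (X i * pderiv i P) (m+1) z
      + (-1/a) * (FF Q (a+1) (pderiv i (X i * P)) (m+1) z
        + (-1/(a+1)) * FF Q (a+2) (X i * (X i * P)) (m+2) z) := by
  have ha1 : 0 < (a+1).re := by simp; linarith
  have e1 := congrFun (pdx_FF Q a ha (pderiv i P) m i) z
  have e2 := congrFun (pdx_FF Q (a+1) ha1 (X i * P) (m+1) i) z
  have e : a + 2 = a + 1 + 1 := by ring
  rw [e, ← e1, ← e2, pdx_FF Q a ha P m i]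
  simp only [pdx]
  have d1 := HD.FF Q a ha (pderiv i P) m z
  have d2 := HD.FF Q (a+1) ha1 (X i * P) (m+1) z
  have d := d1.add ((HD.const (-1/a) z).mul d2)
  rw [d.fderiv, d1.fderiv, d2.fderiv]
  ring

open MvPolynomial in
lemma euler {n k : ℕ} (P : MvPolynomial (Fin n) ℝ) (hP : P.IsHomogeneous k) (x : Fin n → ℝ) :
    ∑ i, ((x i : ℝ) : ℂ) * ((eval x (pderiv i P) : ℝ) : ℂ) = k * ((eval x P : ℝ) : ℂ) := by
  have := congrArg (fun R => ((eval x R : ℝ) : ℂ)) hP.sum_X_mul_pderiv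
  simpa using this

lemma sum_sq {n : ℕ} (x : Fin n → ℝ) :
    ∑ i, ((x i : ℝ) : ℂ) * ((x i : ℝ) : ℂ) = 2 * (((∑ i, x i ^ 2) / 2 : ℝ) : ℂ) := by
  push_cast
  rw [mul_div_cancel₀ _ (two_ne_zero)]
  exact Finset.sum_congr rfl fun i _ => by ring

lemma HD.sum_x {f : Pt p q → ℂ} {z d} (h : HD f z d) :
    ∑ i, ((z.1 i : ℝ) : ℂ) * pdx p q i f z = d (z.1, 0) := by
  obtain ⟨L, h, h'⟩ := h
  rw [← h']
  have : ((z.1, 0) : Pt p q) = ∑ i, z.1 i • ((Pi.single i 1, 0) : Pt p q) := by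
    ext j
    · simp [Prod.fst_sum, Pi.single_apply]
    · simp [Prod.snd_sum]
  rw [this, map_sum]
  refine Finset.sum_congr rfl fun i _ => ?_
  rw [pdx, h.fderiv, map_smul, Complex.real_smul]

lemma HD.sum_y {f : Pt p q → ℂ} {z d} (h : HD f z d) :
    ∑ i, ((z.2 i : ℝ) : ℂ) * pdy p q i f z = d (0, z.2) := by
  obtain ⟨L, h, h'⟩ := h
  rw [← h']
  have : ((0, z.2) : Pt p q) = ∑ i, z.2 i • ((0, Pi.single i 1) : Pt p q) := by
    ext j
    · simp [Prod.fst_sum]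
    · simp [Prod.snd_sum, Pi.single_apply]
  rw [this, map_sum]
  refine Finset.sum_congr rfl fun i _ => ?_
  rw [pdy, h.fderiv, map_smul, Complex.real_smul]

lemma HOp_FF {k l : ℕ} (Q : MvPolynomial (Fin q) ℝ) (a : ℂ) (ha : 0 < a.re)
    (P : MvPolynomial (Fin p) ℝ) (m : ℕ) (hP : P.IsHomogeneous k) (hQ : Q.IsHomogeneous l)
    (z : Pt p q) :
    HOp p q (FF Q a P m) z = (-(k + p/2) + (l + q/2) + 2 * m) * FF Q a P m z := by
  have h := HD.FF Q a ha P m z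
  have hm : (m : ℂ) * ((rhoy p q z : ℝ) : ℂ) ^ (m-1) * ((rhoy p q z : ℝ) : ℂ) =
      m * ((rhoy p q z : ℝ) : ℂ) ^ m := by
    cases m with
    | zero => simp
    | succ m => simp [pow_succ, mul_assoc]
  rw [HOp, h.sum_x, h.sum_y]
  simp only [Pi.zero_apply, Complex.ofReal_zero, zero_mul,
    Finset.sum_const_zero, mul_zero, zero_add, add_zero, euler P hP, euler Q hQ, sum_sq]
  rw [← rhox, ← rhoy]
  simp only [FF]
  linear_combination (2 * ((MvPolynomial.eval z.1 P : ℝ) : ℂ) *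
    ((MvPolynomial.eval z.2 Q : ℝ) : ℂ) * psiF p q a z) * hm

open MvPolynomial in
lemma FF_sum {ι : Type*} (s : Finset ι) (Q : MvPolynomial (Fin q) ℝ) (a : ℂ)
    (P : ι → MvPolynomial (Fin p) ℝ) (m : ℕ) (z : Pt p q) :
    ∑ i ∈ s, FF Q a (P i) m z = FF Q a (∑ i ∈ s, P i) m z := by
  simp only [FF, map_sum, Complex.ofReal_sum, Finset.sum_mul]

open MvPolynomial in
lemma XpOp_FF {k : ℕ} (Q : MvPolynomial (Fin q) ℝ) (a : ℂ) (ha : 0 < a.re)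
    (hk : a = k + p / 2)
    (P : MvPolynomial (Fin p) ℝ) (m : ℕ) (hP : P.IsHomogeneous k)
    (hh : ∑ i : Fin p, pderiv i (pderiv i P) = 0)
    (z : Pt p q) :
    XpOp p q (FF Q a P m) z = 0 := by
  have ha0 : a ≠ 0 := by rintro rfl; simp at ha
  rw [XpOp]
  simp only [pdx_pdx_FF Q a ha, Finset.sum_add_distrib, ← Finset.mul_sum, FF_sum, hh]
  have e1 : ∑ i : Fin p, pderiv i (X i * P) = (p + k : ℕ) • P := by
    simp only [Derivation.leibniz, smul_eq_mul, pderiv_X_self, mul_one, Finset.sum_add_distrib,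
      hP.sum_X_mul_pderiv, Finset.sum_const, Finset.card_univ, Fintype.card_fin]
    rw [add_smul, add_comm]
  have e2 : ∑ i : Fin p, X i * (X i * P) = (∑ i : Fin p, X i ^ 2) * P := by
    rw [Finset.sum_mul]; exact Finset.sum_congr rfl fun i _ => by ring
  rw [e1, e2, hP.sum_X_mul_pderiv]
  have hx : ((eval z.1 (∑ i : Fin p, (X i : MvPolynomial (Fin p) ℝ) ^ 2) : ℝ) : ℂ)
      = 2 * ((rhox p q z : ℝ) : ℂ) := by
    simp only [rhox, map_sum, map_pow, eval_X]; push_cast; ring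
  have hy : (((∑ j, z.2 j ^ 2 : ℝ)) : ℂ) = 2 * ((rhoy p q z : ℝ) : ℂ) := by
    simp only [rhoy]; push_cast; ring
  rw [hy]
  have hr := Psi_rec a ha (((rhox p q z * rhoy p q z : ℝ)) : ℂ)
  simp only [FF, map_mul, hx, Complex.ofReal_mul, map_zero, map_nsmul, nsmul_eq_mul,
    Complex.ofReal_zero, psiF, map_natCast, Complex.ofReal_natCast] at hr ⊢
  set A := ((eval z.1 P : ℝ) : ℂ)
  set B := ((eval z.2 Q : ℝ) : ℂ)
  set x := ((rhox p q z : ℝ) : ℂ)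
  set y := ((rhoy p q z : ℝ) : ℂ)
  have hc : (-1/a) * (2 * k + p) = -2 := by
    have h2 : (2 * k + p : ℂ) = 2 * a := by rw [hk]; ring
    rw [h2]; field_simp
  push_cast
  linear_combination (-A * B * y^(m+1)) * hr
    - (1/2) * A * B * y^(m+1) * Psi (a+1) (x*y) * hc

end S12

end

theorem stmt_12 (p q k l : ℕ) (hp : 1 ≤ p) (hq : 1 ≤ q)
    (h₁ : MvPolynomial (Fin p) ℝ) (h₂ : MvPolynomial (Fin q) ℝ)
    (hhom₁ : h₁.IsHomogeneous k) (hhom₂ : h₂.IsHomogeneous l)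
    (hharm₁ : ∑ i : Fin p, MvPolynomial.pderiv i (MvPolynomial.pderiv i h₁) = 0)
    (hharm₂ : ∑ j : Fin q, MvPolynomial.pderiv j (MvPolynomial.pderiv j h₂) = 0)
    (κp κm : ℂ) (hκp : κp = (k : ℂ) + (p : ℂ) / 2) (hκm : κm = (l : ℂ) + (q : ℂ) / 2)
    (μ : ℕ) (f : Pt p q → ℂ)
    (hf : f = fun z =>
      ((MvPolynomial.eval z.1 h₁ : ℝ) : ℂ) * ((MvPolynomial.eval z.2 h₂ : ℝ) : ℂ) *
        ((rhoy p q z : ℝ) : ℂ) ^ μ * psiF p q κp z) :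
    (∀ z, HOp p q f z = (-κp + κm + 2 * (μ : ℂ)) * f z) ∧ (∀ z, XpOp p q f z = 0) := by
  have ha : 0 < κp.re := by
    have h1 : κp = ((k + p / 2 : ℝ) : ℂ) := by rw [hκp]; push_cast; ring
    rw [h1, Complex.ofReal_re]
    have : (1:ℝ) ≤ p := by exact_mod_cast hp
    positivity
  have e : f = S12.FF h₂ κp h₁ μ := hf
  rw [e]
  constructor
  · intro z
    rw [S12.HOp_FF h₂ κp ha h₁ μ hhom₁ hhom₂ z, hκm, ← hκp]
  · intro z
    exact S12.XpOp_FF h₂ κp ha hκp h₁ μ hhom₁ hharm₁ z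
end

section
/- Let h₁ be a harmonic polynomial on ℝ^p homogeneous of degree k, let h₂ be a harmonic polynomial on ℝ^q homogeneous of degree l, set κ₊ = k + p/2 and κ₋ = l + q/2, and let μ ∈ ℕ. Then the smooth function f(x,y) = h₁(x)·h₂(y)·ρ_x^μ·Ψ_{κ₋}(ρ_x ρ_y) on ℝ^p × ℝ^q satisfies H f = (−κ₊ + κ₋ − 2μ)·f and X⁻ f = 0 everywhere; i.e. f is a lowest weight vector of weight λ = −κ₊ + κ₋ − 2μ for the 𝔰𝔩₂-action. -/
theorem evalFD {n : ℕ} (h : MvPolynomial (Fin n) ℝ) (x : Fin n → ℝ) :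
    HasFDerivAt (fun x : Fin n → ℝ => MvPolynomial.eval x h)
      (∑ i, MvPolynomial.eval x (MvPolynomial.pderiv i h) • (ContinuousLinearMap.proj i : (Fin n → ℝ) →L[ℝ] ℝ)) x := by
  induction h using MvPolynomial.induction_on with
  | C a => simpa using hasFDerivAt_const a x
  | add f g hf hg =>
    simp only [map_add, add_smul, Finset.sum_add_distrib]
    exact hf.add hg
  | mul_X f j hf =>
    have h1 : HasFDerivAt (fun x : Fin n → ℝ => x j) (ContinuousLinearMap.proj j : (Fin n → ℝ) →L[ℝ] ℝ) x :=
      (ContinuousLinearMap.proj j : (Fin n → ℝ) →L[ℝ] ℝ).hasFDerivAt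
    have := hf.mul h1
    simp only [map_mul, MvPolynomial.eval_X]
    refine this.congr_fderiv ?_
    ext v
    simp [MvPolynomial.pderiv_X, Pi.single_apply, Finset.mul_sum, add_mul, Finset.sum_add_distrib, apply_ite]
    apply Finset.sum_congr rfl
    intros; ring

noncomputable def PS (a : ℕ → ℂ) (u : ℂ) : ℂ := ∑' n, a n * u ^ n
noncomputable def Sh (a : ℕ → ℂ) (n : ℕ) : ℂ := (n + 1) * a (n + 1)
noncomputable def Bd (a : ℕ → ℂ) : Prop := ∃ C R : ℝ, 0 ≤ R ∧ ∀ n, ‖a n‖ ≤ C * R ^ n / n.factorial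

theorem Bd.sh {a : ℕ → ℂ} (h : Bd a) : Bd (Sh a) := by
  obtain ⟨C, R, hR, h⟩ := h
  refine ⟨C * R, R, hR, fun n => ?_⟩
  have := h (n + 1)
  have e : ‖((n : ℂ) + 1)‖ = n + 1 := by
    have := Complex.norm_natCast (n + 1)
    push_cast at this; exact this
  rw [Sh, norm_mul, e]
  calc _ ≤ ((n : ℝ) + 1) * (C * R ^ (n + 1) / (n + 1).factorial) := by gcongr
    _ = _ := by
      rw [Nat.factorial_succ]; push_cast; field_simp; ring

theorem Bd.summable {a : ℕ → ℂ} (h : Bd a) (u : ℂ) : Summable fun n => a n * u ^ n := by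
  obtain ⟨C, R, hR, h⟩ := h
  refine Summable.of_norm_bounded ((Real.summable_pow_div_factorial (R * ‖u‖)).mul_left C) fun n => ?_
  rw [norm_mul, norm_pow, mul_pow]
  calc _ ≤ (C * R ^ n / n.factorial) * ‖u‖ ^ n := by gcongr; exact h n
    _ = _ := by ring

theorem Bd.deriv {a : ℕ → ℂ} (h : Bd a) (u : ℂ) : HasDerivAt (PS a) (PS (Sh a) u) u := by
  set r : ℝ := ‖u‖ + 1
  have hr : 0 ≤ r := by positivity
  have hn : Summable fun n => ‖Sh a n‖ * r ^ n := by
    have := (h.sh.summable (r : ℂ)).norm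
    refine this.congr fun n => ?_
    simp [abs_of_nonneg hr]
  have key := hasDerivAt_tsum_of_isPreconnected (𝕜 := ℂ) (g := fun n u => a n * u ^ n)
    (g' := fun n u => a n * (n * u ^ (n - 1))) (u := fun n => ‖a n‖ * (n * r ^ (n - 1)))
    (t := Metric.ball 0 r) (y₀ := 0) (y := u) ?_ Metric.isOpen_ball (convex_ball 0 r).isPreconnected
    ?_ ?_ ?_ (h.summable 0) ?_
  · refine HasDerivAt.congr_deriv key ?_
    rw [Summable.tsum_eq_zero_add]
    · simp only [PS, Sh]
      simp
      refine tsum_congr fun n => by ring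
    · rw [← summable_nat_add_iff 1]
      refine (h.sh.summable u).congr fun n => ?_
      simp [Sh]; ring
  · rw [← summable_nat_add_iff 1]
    refine hn.congr fun n => ?_
    have e : ‖((n : ℂ) + 1)‖ = n + 1 := by
      have := Complex.norm_natCast (n + 1)
      push_cast at this; exact this
    simp [Sh, e]; ring
  · intro n y _
    exact (hasDerivAt_pow n y).const_mul _
  · intro n y hy
    have : ‖y‖ ≤ r := by simpa using (Metric.mem_ball.1 hy).le
    rw [norm_mul, norm_mul, norm_pow, Complex.norm_natCast]
    gcongr
  · simp; positivity
  · simp [r]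

theorem rising_bd (l q : ℕ) (hq : 1 ≤ q) (n : ℕ) : (1 / 2 : ℝ) ^ n ≤ ‖rising ((l : ℂ) + (q : ℂ) / 2) n‖ := by
  induction n with
  | zero => simp [rising]
  | succ n ih =>
    rw [rising, norm_mul, pow_succ]
    gcongr
    have : ((l : ℂ) + (q : ℂ) / 2 + n) = (((l : ℝ) + q / 2 + n : ℝ) : ℂ) := by push_cast; ring
    rw [this, Complex.norm_real, Real.norm_of_nonneg (by positivity)]
    have : (1 : ℝ) ≤ q := by exact_mod_cast hq
    have : (0 : ℝ) ≤ l := by positivity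
    have : (0 : ℝ) ≤ n := by positivity
    linarith

noncomputable def ac (α : ℂ) (n : ℕ) : ℂ := (-1) ^ n / ((n.factorial : ℂ) * rising α n)

theorem ac_bd (l q : ℕ) (hq : 1 ≤ q) : Bd (ac ((l : ℂ) + (q : ℂ) / 2)) := by
  refine ⟨1, 2, by norm_num, fun n => ?_⟩
  have := rising_bd l q hq n
  rw [ac, norm_div, norm_mul, Complex.norm_natCast]
  simp only [norm_pow, norm_neg, norm_one, one_pow, one_mul]
  rw [mul_comm, ← div_div]
  gcongr
  rw [div_le_iff₀ (lt_of_lt_of_le (by positivity) this)]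
  calc (1 : ℝ) = 2 ^ n * (1 / 2) ^ n := by rw [← mul_pow]; norm_num
    _ ≤ _ := by gcongr

theorem ac_ode (l q : ℕ) (hq : 1 ≤ q) (u : ℂ) :
    u * PS (Sh (Sh (ac ((l : ℂ) + (q : ℂ) / 2)))) u
      + ((l : ℂ) + (q : ℂ) / 2) * PS (Sh (ac ((l : ℂ) + (q : ℂ) / 2))) u
      = - PS (ac ((l : ℂ) + (q : ℂ) / 2)) u := by
  have hb := ac_bd l q hq
  have hr : ∀ n, rising ((l : ℂ) + (q : ℂ) / 2) n ≠ 0 := fun n h0 => by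
    have := rising_bd l q hq n
    rw [h0, norm_zero] at this
    have : (0 : ℝ) < (1 / 2) ^ n := by positivity
    linarith
  set α := ((l : ℂ) + (q : ℂ) / 2)
  have hs := hb.sh.summable u
  have h1 : u * PS (Sh (Sh (ac α))) u = ∑' n : ℕ, (n : ℂ) * Sh (ac α) n * u ^ n := by
    rw [Summable.tsum_eq_zero_add, PS, ← tsum_mul_left]
    · simp only [Nat.cast_zero, zero_mul, zero_add]
      refine tsum_congr fun n => ?_
      rw [Sh]; push_cast; ring
    · rw [← summable_nat_add_iff 1]
      refine ((hb.sh.sh.summable u).mul_left u).congr fun n => ?_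
      rw [Sh]; push_cast; ring
  have h1s : Summable fun n : ℕ => (n : ℂ) * Sh (ac α) n * u ^ n := by
    rw [← summable_nat_add_iff 1]
    refine ((hb.sh.sh.summable u).mul_left u).congr fun n => ?_
    rw [Sh]; push_cast; ring
  rw [h1, PS, PS, ← tsum_mul_left, ← Summable.tsum_add h1s (hs.mul_left α), ← tsum_neg]
  refine tsum_congr fun n => ?_
  have hn := hr n
  have hn1 := hr (n + 1)
  rw [rising] at hn1
  have h3 := right_ne_zero_of_mul hn1
  have : ac α n = - ((n + 1) * (α + n) * ac α (n + 1)) := by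
    have : (n : ℂ) + 1 ≠ 0 := by exact_mod_cast n.succ_ne_zero
    have : (n.factorial : ℂ) ≠ 0 := by exact_mod_cast n.factorial_ne_zero
    rw [ac, ac, rising, Nat.factorial_succ]; push_cast; field_simp; ring
  rw [this, Sh]; ring

noncomputable def G (p q : ℕ) (h₁ : MvPolynomial (Fin p) ℝ) (h₂ : MvPolynomial (Fin q) ℝ) (m : ℕ) (a : ℕ → ℂ)
    (z : Pt p q) : ℂ :=
  ((MvPolynomial.eval z.1 h₁ : ℝ) : ℂ) * ((MvPolynomial.eval z.2 h₂ : ℝ) : ℂ) *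
        ((rhox p q z : ℝ) : ℂ) ^ m * PS a (((rhox p q z * rhoy p q z : ℝ)) : ℂ)

noncomputable def rp (n : ℕ) : MvPolynomial (Fin n) ℝ := MvPolynomial.C (1 / 2) * ∑ i, MvPolynomial.X i ^ 2

theorem rp_eval (n : ℕ) (x : Fin n → ℝ) : MvPolynomial.eval x (rp n) = (∑ i, x i ^ 2) / 2 := by
  simp [rp]; ring

theorem rp_pderiv (n : ℕ) (i : Fin n) : MvPolynomial.pderiv i (rp n) = MvPolynomial.X i := by
  simp [rp, MvPolynomial.pderiv_X, Pi.single_apply]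
  rw [← mul_assoc, ← map_ofNat MvPolynomial.C 2, ← MvPolynomial.C_mul]; norm_num

theorem G_fd (p q : ℕ) (h₁ : MvPolynomial (Fin p) ℝ) (h₂ : MvPolynomial (Fin q) ℝ) (m : ℕ) {a : ℕ → ℂ}
    (ha : Bd a) (z : Pt p q) : ∃ L : Pt p q →L[ℝ] ℂ, HasFDerivAt (G p q h₁ h₂ m a) L z ∧
    (∀ i, L (Pi.single i 1, 0) = G p q (MvPolynomial.pderiv i h₁) h₂ m a z
        + m * (z.1 i * G p q h₁ h₂ (m - 1) a z)
        + z.1 i * rhoy p q z * G p q h₁ h₂ m (Sh a) z) ∧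
    (∀ j, L (0, Pi.single j 1) = G p q h₁ (MvPolynomial.pderiv j h₂) m a z
        + G p q h₁ (MvPolynomial.X j * h₂) (m + 1) (Sh a) z) := by
  have A1 := fun h => ((evalFD h z.1).comp z (hasFDerivAt_fst (𝕜 := ℝ) (p := z)))
  have A2 := fun h => ((evalFD h z.2).comp z (hasFDerivAt_snd (𝕜 := ℝ) (p := z)))
  have ox : rhox p q = fun z => MvPolynomial.eval z.1 (rp p) := by
    ext z; rw [rp_eval]; rfl
  have oy : rhoy p q = fun z => MvPolynomial.eval z.2 (rp q) := by
    ext z; rw [rp_eval]; rfl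
  have B1 := Complex.ofRealCLM.hasFDerivAt.comp z (A1 h₁)
  have B2 := Complex.ofRealCLM.hasFDerivAt.comp z (A2 h₂)
  have Bx := Complex.ofRealCLM.hasFDerivAt.comp z (A1 (rp p))
  have Bu := Complex.ofRealCLM.hasFDerivAt.comp z ((A1 (rp p)).mul (A2 (rp q)))
  have Bp := (ha.deriv ((rhox p q z * rhoy p q z : ℝ) : ℂ))
  rw [ox, oy] at Bp
  have Bc := Bp.comp_hasFDerivAt z Bu
  have T := ((B1.mul B2).mul (Bx.pow m)).mul Bc
  refine ⟨_, T.congr_of_eventuallyEq (Filter.Eventually.of_forall fun w => ?_), fun i => ?_, fun j => ?_⟩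
  · simp [G, ox, oy]
  · simp [G, ox, oy, rp_pderiv, Pi.single_apply]
    ring
  · simp [G, ox, oy, rp_pderiv, Pi.single_apply]
    ring

theorem pdx_G (p q : ℕ) (h₁ : MvPolynomial (Fin p) ℝ) (h₂ : MvPolynomial (Fin q) ℝ) (m : ℕ) {a : ℕ → ℂ}
    (ha : Bd a) (i : Fin p) (z : Pt p q) : pdx p q i (G p q h₁ h₂ m a) z =
      G p q (MvPolynomial.pderiv i h₁) h₂ m a z
        + m * (z.1 i * G p q h₁ h₂ (m - 1) a z)
        + z.1 i * rhoy p q z * G p q h₁ h₂ m (Sh a) z := by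
  obtain ⟨L, hL, h1, h2⟩ := G_fd p q h₁ h₂ m ha z
  rw [pdx, hL.fderiv, h1]

theorem pdy_G (p q : ℕ) (h₁ : MvPolynomial (Fin p) ℝ) (h₂ : MvPolynomial (Fin q) ℝ) (m : ℕ) {a : ℕ → ℂ}
    (ha : Bd a) (j : Fin q) : pdy p q j (G p q h₁ h₂ m a) =
      G p q h₁ (MvPolynomial.pderiv j h₂) m a
        + G p q h₁ (MvPolynomial.X j * h₂) (m + 1) (Sh a) := by
  ext z
  obtain ⟨L, hL, h1, h2⟩ := G_fd p q h₁ h₂ m ha z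
  rw [pdy, hL.fderiv, h2]; rfl

theorem G_diff (p q : ℕ) (h₁ : MvPolynomial (Fin p) ℝ) (h₂ : MvPolynomial (Fin q) ℝ) (m : ℕ) {a : ℕ → ℂ}
    (ha : Bd a) : Differentiable ℝ (G p q h₁ h₂ m a) := fun z => by
  obtain ⟨L, hL, -⟩ := G_fd p q h₁ h₂ m ha z
  exact hL.differentiableAt

theorem pdyy_G (p q : ℕ) (h₁ : MvPolynomial (Fin p) ℝ) (h₂ : MvPolynomial (Fin q) ℝ) (m : ℕ) {a : ℕ → ℂ}
    (ha : Bd a) (j : Fin q) : pdy p q j (pdy p q j (G p q h₁ h₂ m a)) =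
      (G p q h₁ (MvPolynomial.pderiv j (MvPolynomial.pderiv j h₂)) m a
        + G p q h₁ (MvPolynomial.X j * MvPolynomial.pderiv j h₂) (m + 1) (Sh a)) +
      (G p q h₁ (MvPolynomial.pderiv j (MvPolynomial.X j * h₂)) (m + 1) (Sh a)
        + G p q h₁ (MvPolynomial.X j * (MvPolynomial.X j * h₂)) (m + 1 + 1) (Sh (Sh a))) := by
  rw [← pdy_G p q h₁ (MvPolynomial.pderiv j h₂) m ha, ← pdy_G p q h₁ (MvPolynomial.X j * h₂) (m + 1) ha.sh,
    pdy_G p q h₁ h₂ m ha]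
  ext z
  rw [pdy, fderiv_add (G_diff p q _ _ _ ha z) (G_diff p q _ _ _ ha.sh z)]
  rfl

theorem G_sum_y (p q : ℕ) (h₁ : MvPolynomial (Fin p) ℝ) (g : Fin q → MvPolynomial (Fin q) ℝ) (m : ℕ) (a : ℕ → ℂ)
    (z : Pt p q) : ∑ j, G p q h₁ (g j) m a z = G p q h₁ (∑ j, g j) m a z := by
  simp [G, Finset.mul_sum, Finset.sum_mul]

theorem stmt_13 (p q k l : ℕ) (hp : 1 ≤ p) (hq : 1 ≤ q)
    (h₁ : MvPolynomial (Fin p) ℝ) (h₂ : MvPolynomial (Fin q) ℝ)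
    (hhom₁ : h₁.IsHomogeneous k) (hhom₂ : h₂.IsHomogeneous l)
    (hharm₁ : ∑ i : Fin p, MvPolynomial.pderiv i (MvPolynomial.pderiv i h₁) = 0)
    (hharm₂ : ∑ j : Fin q, MvPolynomial.pderiv j (MvPolynomial.pderiv j h₂) = 0)
    (κp κm : ℂ) (hκp : κp = (k : ℂ) + (p : ℂ) / 2) (hκm : κm = (l : ℂ) + (q : ℂ) / 2)
    (μ : ℕ) (f : Pt p q → ℂ)
    (hf : f = fun z =>
      ((MvPolynomial.eval z.1 h₁ : ℝ) : ℂ) * ((MvPolynomial.eval z.2 h₂ : ℝ) : ℂ) *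
        ((rhox p q z : ℝ) : ℂ) ^ μ * psiF p q κm z) :
    (∀ z, HOp p q f z = (-κp + κm - 2 * (μ : ℂ)) * f z) ∧ (∀ z, XmOp p q f z = 0) := by
  have hb : Bd (ac κm) := by rw [hκm]; exact ac_bd l q hq
  have hfG : f = G p q h₁ h₂ μ (ac κm) := by rw [hf]; rfl
  have e1 := hhom₁.sum_X_mul_pderiv
  have e2 := hhom₂.sum_X_mul_pderiv
  have ox : ∀ z : Pt p q, ∑ i, z.1 i ^ 2 = 2 * rhox p q z := fun z => by rw [rhox]; ring
  have oy : ∀ z : Pt p q, ∑ i, z.2 i ^ 2 = 2 * rhoy p q z := fun z => by rw [rhoy]; ring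
  subst hfG
  clear hf
  constructor
  · intro z
    have e1z := congrArg (fun h => ((MvPolynomial.eval z.1 h : ℝ) : ℂ)) e1
    have e2z := congrArg (fun h => ((MvPolynomial.eval z.2 h : ℝ) : ℂ)) e2
    simp at e1z e2z
    have oxz : ∑ i, (z.1 i : ℂ) * z.1 i = 2 * rhox p q z := by
      have := congrArg (fun r : ℝ => (r : ℂ)) (ox z)
      push_cast at this
      simpa only [sq] using this
    have oyz : ∑ i, (z.2 i : ℂ) * z.2 i = 2 * rhoy p q z := by
      have := congrArg (fun r : ℝ => (r : ℂ)) (oy z)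
      push_cast at this
      simpa only [sq] using this
    have X : ∑ i, ((z.1 i : ℝ) : ℂ) * pdx p q i (G p q h₁ h₂ μ (ac κm)) z
        = (k + 2 * μ) * G p q h₁ h₂ μ (ac κm) z
          + 2 * (rhox p q z * rhoy p q z) * G p q h₁ h₂ μ (Sh (ac κm)) z := by
      have : ∀ i, ((z.1 i : ℝ) : ℂ) * pdx p q i (G p q h₁ h₂ μ (ac κm)) z =
          (z.1 i * (MvPolynomial.eval z.1 (MvPolynomial.pderiv i h₁) : ℝ)) *
            (((MvPolynomial.eval z.2 h₂ : ℝ) : ℂ) *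
              ((rhox p q z : ℝ) : ℂ) ^ μ * PS (ac κm) (((rhox p q z * rhoy p q z : ℝ)) : ℂ))
          + (z.1 i * z.1 i) * (μ * G p q h₁ h₂ (μ - 1) (ac κm) z
            + rhoy p q z * G p q h₁ h₂ μ (Sh (ac κm)) z) := fun i => by
        rw [pdx_G p q h₁ h₂ μ hb, G]; ring
      rw [Finset.sum_congr rfl fun i _ => this i, Finset.sum_add_distrib, ← Finset.sum_mul,
        ← Finset.sum_mul, e1z, oxz]
      have hm : (rhox p q z : ℂ) * (μ * G p q h₁ h₂ (μ - 1) (ac κm) z) = μ * G p q h₁ h₂ μ (ac κm) z := by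
        cases μ with
        | zero => simp
        | succ n => simp only [G, Nat.add_sub_cancel, pow_succ]; ring
      have hG : (k : ℂ) * ((MvPolynomial.eval z.1 h₁ : ℝ) : ℂ) * (((MvPolynomial.eval z.2 h₂ : ℝ) : ℂ) *
              ((rhox p q z : ℝ) : ℂ) ^ μ * PS (ac κm) (((rhox p q z * rhoy p q z : ℝ)) : ℂ))
          = k * G p q h₁ h₂ μ (ac κm) z := by rw [G]; ring
      linear_combination 2 * hm + hG
    have Y : ∑ j, ((z.2 j : ℝ) : ℂ) * pdy p q j (G p q h₁ h₂ μ (ac κm)) z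
        = l * G p q h₁ h₂ μ (ac κm) z
          + 2 * (rhox p q z * rhoy p q z) * G p q h₁ h₂ μ (Sh (ac κm)) z := by
      have : ∀ i, ((z.2 i : ℝ) : ℂ) * pdy p q i (G p q h₁ h₂ μ (ac κm)) z =
          (z.2 i * (MvPolynomial.eval z.2 (MvPolynomial.pderiv i h₂) : ℝ)) *
            (((MvPolynomial.eval z.1 h₁ : ℝ) : ℂ) *
              ((rhox p q z : ℝ) : ℂ) ^ μ * PS (ac κm) (((rhox p q z * rhoy p q z : ℝ)) : ℂ))
          + (z.2 i * z.2 i) * (rhox p q z * G p q h₁ h₂ μ (Sh (ac κm)) z) := fun i => by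
        rw [pdy_G p q h₁ h₂ μ hb, Pi.add_apply]; simp only [G, map_mul, MvPolynomial.eval_X]
        push_cast; ring
      rw [Finset.sum_congr rfl fun i _ => this i, Finset.sum_add_distrib, ← Finset.sum_mul,
        ← Finset.sum_mul, e2z, oyz]
      rw [G, G]; ring
    rw [HOp, X, Y, hκp]
    linear_combination (-G p q h₁ h₂ μ (ac κm) z) * hκm
  · intro z
    have ode := ac_ode l q hq ((rhox p q z * rhoy p q z : ℝ) : ℂ)
    rw [← hκm] at ode
    have e3 : ∑ j, MvPolynomial.pderiv j (MvPolynomial.X j * h₂) = (l + q) • h₂ := by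
      simp [Derivation.leibniz, Finset.sum_add_distrib]
      rw [← nsmul_eq_mul, e2.symm.symm]
      simp only [nsmul_eq_mul, Nat.cast_add]
      simp [mul_comm, add_mul] at e2 ⊢
      ring
    have e4 : ∑ j, MvPolynomial.X j * (MvPolynomial.X j * h₂) = (∑ j, MvPolynomial.X j ^ 2) * h₂ := by
      rw [Finset.sum_mul]; exact Finset.sum_congr rfl fun j _ => by ring
    rw [XmOp]
    simp only [pdyy_G p q h₁ h₂ μ hb, Pi.add_apply, Finset.sum_add_distrib, G_sum_y, e2, e3, e4, hharm₂, ox]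
    simp only [G, map_zero, map_mul, map_sum, map_pow, MvPolynomial.eval_X, oy, nsmul_eq_mul, map_natCast]
    push_cast at ode ⊢
    rw [hκm] at ode ⊢
    linear_combination ((MvPolynomial.eval z.1 h₁ : ℝ) : ℂ) * ((MvPolynomial.eval z.2 h₂ : ℝ) : ℂ) *
        ((rhox p q z : ℝ) : ℂ) ^ (μ + 1) * ode
end

section
/- Let h₁ be a harmonic polynomial on ℝ^p homogeneous of degree k, h₂ a harmonic polynomial on ℝ^q homogeneous of degree l, set κ₊ = k + p/2, κ₋ = l + q/2, let a, b ∈ ℕ and α ∈ ℂ ∖ {0,−1,−2,…}, and let f = h₁·h₂·ρ_x^a·ρ_y^b·ψ_α. Then at every point (x,y) with x ≠ 0 and y ≠ 0 (so that integer powers ρ_x^{a−1}, ρ_y^{b−1} are defined even when a = 0 or b = 0): (1) H f = (−κ₊ + κ₋ − 2a + 2b)·f; (2) X⁺ f = h₁·h₂·( −a(κ₊ + a − 1)·ρ_x^{a−1}ρ_y^b·ψ_α + ((κ₊ + 2a − α)/α)·ρ_x^a ρ_y^{b+1}·ψ_{α+1} ); (3) X⁻ f = h₁·h₂·( b(κ₋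 + b − 1)·ρ_x^a ρ_y^{b−1}·ψ_α − ((κ₋ + 2b − α)/α)·ρ_x^{a+1} ρ_y^b·ψ_{α+1} ). -/
noncomputable section

lemma rising_ne (α : ℂ) (hα : ∀ n : ℕ, α ≠ -(n : ℂ)) (n : ℕ) : rising α n ≠ 0 := by
  induction n with
  | zero => simp [rising]
  | succ n ih =>
    rw [rising]
    refine mul_ne_zero ih (fun h => hα n (eq_neg_of_add_eq_zero_left h))

lemma rising_succ' (α : ℂ) (n : ℕ) : rising α (n+1) = α * rising (α+1) n := by
  induction n with
  | zero => simp [rising]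
  | succ n ih =>
    rw [rising, ih, rising]; push_cast; ring

lemma al_succ {α : ℂ} (hα : ∀ n : ℕ, α ≠ -(n : ℂ)) : ∀ n : ℕ, α + 1 ≠ -(n : ℂ) := by
  intro n h
  apply hα (n+1); push_cast; linear_combination h

lemma al_ne {α : ℂ} (hα : ∀ n : ℕ, α ≠ -(n : ℂ)) : α ≠ 0 := by
  simpa using hα 0

def cc (α : ℂ) (n : ℕ) : ℂ := (-1) ^ n / ((n.factorial : ℂ) * rising α n)

lemma cc_succ (α : ℂ) (hα : ∀ n : ℕ, α ≠ -(n : ℂ)) (n : ℕ) :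
    cc α (n+1) = - cc α n / ((n+1) * (α + n)) := by
  have h1 := rising_ne α hα n
  have h2 : α + n ≠ 0 := fun h => hα n (eq_neg_of_add_eq_zero_left h)
  have h3 : (n.factorial : ℂ) ≠ 0 := by exact_mod_cast n.factorial_ne_zero
  have h4 : (n:ℂ)+1 ≠ 0 := by exact_mod_cast n.succ_ne_zero
  unfold cc
  rw [rising, Nat.factorial_succ]
  push_cast
  field_simp
  ring

lemma cc_shift (α : ℂ) (hα : ∀ n : ℕ, α ≠ -(n : ℂ)) (n : ℕ) :
    cc α (n+1) * (n+1) = - (1/α) * cc (α+1) n := by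
  have h1 := rising_ne _ (al_succ hα) n
  have h2 := al_ne hα
  have h3 : (n.factorial : ℂ) ≠ 0 := by exact_mod_cast n.factorial_ne_zero
  have h4 : (n:ℂ)+1 ≠ 0 := by exact_mod_cast n.succ_ne_zero
  unfold cc
  rw [rising_succ', Nat.factorial_succ]
  push_cast
  field_simp
  ring

lemma cc_summable (α : ℂ) (hα : ∀ n : ℕ, α ≠ -(n : ℂ)) (u : ℂ) :
    Summable (fun n => ‖cc α n * u ^ n‖) := by
  by_cases hu : u = 0
  · subst hu
    refine summable_of_ne_finset_zero (s := {0}) ?_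
    intro n hn
    have : n ≠ 0 := by simpa using hn
    simp [this]
  have hc : ∀ n, cc α n ≠ 0 := fun n => by
    have h1 := rising_ne α hα n
    have h3 : (n.factorial : ℂ) ≠ 0 := by exact_mod_cast n.factorial_ne_zero
    unfold cc
    exact div_ne_zero (by simp) (mul_ne_zero h3 h1)
  refine summable_of_ratio_test_tendsto_lt_one (l := 0) zero_lt_one ?_ ?_
  · exact Filter.Eventually.of_forall fun n => by simp [hc n, hu]
  · have e : ∀ n : ℕ, ‖‖cc α (n+1) * u ^ (n+1)‖‖ / ‖‖cc α n * u ^ n‖‖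
        = ‖u‖ * (‖((n:ℂ)+1)⁻¹‖ * ‖((n:ℂ) + α)⁻¹‖) := by
      intro n
      rw [norm_norm, norm_norm, ← norm_div, ← norm_mul, ← norm_mul, cc_succ α hα]
      rw [← norm_neg]
      congr 1
      have h2 : α + n ≠ 0 := fun h => hα n (eq_neg_of_add_eq_zero_left h)
      have h2' : n + α ≠ 0 := by rwa [add_comm]
      have h4 : (n:ℂ)+1 ≠ 0 := by exact_mod_cast n.succ_ne_zero
      have := hc n
      field_simp
      ring
    simp_rw [e]
    have t : ∀ β : ℂ, Filter.Tendsto (fun n : ℕ => ‖((n:ℂ) + β)⁻¹‖) Filter.atTop (nhds 0) := by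
      intro β
      have h2 : Filter.Tendsto (fun n : ℕ => (n:ℂ) + β) Filter.atTop (Bornology.cobounded ℂ) := by
        rw [← tendsto_norm_atTop_iff_cobounded]
        have h3 := Filter.tendsto_atTop_add_const_right Filter.atTop (-‖β‖)
          (tendsto_natCast_atTop_atTop (R := ℝ))
        refine Filter.tendsto_atTop_mono (fun n => ?_) h3
        have := norm_sub_le ((n:ℂ) + β) β
        simp at this
        linarith
      have := (Filter.tendsto_inv₀_cobounded (α := ℂ)).comp h2
      simpa using this.norm
    simpa using ((t 1).mul (t α)).const_mul ‖u‖

lemma Psi_eq (α u : ℂ) : Psi α u = ∑' n, cc α n * u ^ n := rfl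

lemma Psi_deriv (α : ℂ) (hα : ∀ n : ℕ, α ≠ -(n : ℂ)) (u : ℂ) :
    HasDerivAt (Psi α) (-(1/α) * Psi (α+1) u) u := by
  set R : ℝ := ‖u‖ + 1
  have hR : 0 < R := by positivity
  have key := hasDerivAt_tsum_of_isPreconnected (𝕜 := ℂ) (F := ℂ)
    (g := fun n w => cc α n * w ^ n) (g' := fun n w => cc α n * (n * w ^ (n-1)))
    (u := fun n => ‖cc α n * (n * (R:ℂ) ^ (n-1))‖) (t := Metric.ball 0 R) (y₀ := 0) (y := u)
    ?_ Metric.isOpen_ball (convex_ball _ _).isPreconnected ?_ ?_ ?_ ?_ ?_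
  · have e : -(1/α) * Psi (α+1) u = ∑' n : ℕ, cc α n * (n * u ^ (n-1)) := by
      rw [Psi_eq, ← tsum_mul_left]
      have hs : Summable (fun n : ℕ => cc α n * (n * u ^ (n-1))) := by
        rw [← summable_nat_add_iff 1]
        refine ((cc_summable _ (al_succ hα) u).of_norm.mul_left (-(1/α))).congr fun n => ?_
        push_cast
        rw [← mul_assoc, ← mul_assoc, cc_shift α hα]
      rw [hs.tsum_eq_zero_add]
      simp only [Nat.cast_zero, zero_mul, mul_zero, zero_add]
      refine tsum_congr fun n => ?_
      push_cast
      rw [← mul_assoc, ← mul_assoc, cc_shift α hα]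
    rw [e]
    exact key
  · rw [← summable_nat_add_iff 1]
    refine ((cc_summable _ (al_succ hα) R).mul_left ‖-(1/α)‖).congr fun n => ?_
    rw [← norm_mul]
    push_cast
    rw [← mul_assoc, ← mul_assoc, cc_shift α hα]
  · intro n y hy
    simpa using (hasDerivAt_pow n y).const_mul (cc α n)
  · intro n y hy
    have : ‖y‖ ≤ R := by simpa using (Metric.mem_ball.1 hy).le
    simp only [norm_mul, norm_pow]
    rw [Complex.norm_real, Real.norm_of_nonneg hR.le]
    gcongr
  · simpa using hR
  · exact (cc_summable α hα 0).of_norm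
  · simp [R]

lemma Psi_rec (α : ℂ) (hα : ∀ n : ℕ, α ≠ -(n : ℂ)) (u : ℂ) :
    u * Psi (α+1+1) u / (α * (α+1)) - Psi (α+1) u + Psi α u = 0 := by
  have s0 := (cc_summable α hα u).of_norm
  have s1 := (cc_summable _ (al_succ hα) u).of_norm
  have s2 := (cc_summable _ (al_succ (al_succ hα)) u).of_norm
  rw [Psi_eq, Psi_eq, Psi_eq, s0.tsum_eq_zero_add, s1.tsum_eq_zero_add]
  have e : u * (∑' n, cc (α+1+1) n * u ^ n) / (α * (α+1))
      = ∑' n, (cc (α+1+1) n * u ^ n) * (u / (α * (α+1))) := by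
    rw [tsum_mul_right]; ring
  have key : ∑' n, (cc (α+1+1) n * u ^ n) * (u / (α * (α+1))) =
     ∑' n, cc (α+1) (n+1) * u ^ (n+1) - ∑' n, cc α (n+1) * u ^ (n+1) := by
    rw [← Summable.tsum_sub ((summable_nat_add_iff 1).2 s1) ((summable_nat_add_iff 1).2 s0)]
    refine tsum_congr fun n => ?_
    have h4 : (n:ℂ)+1 ≠ 0 := by exact_mod_cast n.succ_ne_zero
    have g0 := cc_shift α hα n
    have g1 := cc_shift _ (al_succ hα) n
    have a0 := al_ne hα
    have a1 := al_ne (al_succ hα)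
    have a2 : α + 1 + n ≠ 0 := fun h => al_succ hα n (eq_neg_of_add_eq_zero_left h)
    have h2 : cc (α+1+1) n = -(α+1) * (cc (α+1) (n+1) * (n+1)) := by
      rw [g1]; field_simp
    have h3 : cc (α+1) n = - cc (α+1) (n+1) * ((n+1) * (α+1+n)) := by
      rw [cc_succ _ (al_succ hα)]; field_simp
    have h5 : cc α (n+1) = (1/α) * cc (α+1) (n+1) * (α+1+n) := by
      apply mul_right_cancel₀ h4
      rw [g0, h3]; ring
    rw [h2, h5]
    field_simp
    ring
  rw [e, key]
  have z0 : ∀ β, cc β 0 = 1 := fun β => by simp [cc, rising]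
  rw [z0, z0]; ring

end
section
variable {E : Type*} [NormedAddCommGroup E] [NormedSpace ℝ E]

def DD (v : E) (f f' : E → ℂ) : Prop := Differentiable ℝ f ∧ ∀ z, fderiv ℝ f z v = f' z

lemma DD.congr {v : E} {f f' g g' : E → ℂ} (h : DD v f f') (h1 : ∀ z, g z = f z)
    (h2 : ∀ z, g' z = f' z) : DD v g g' := by
  have e1 : g = f := funext h1
  have e2 : g' = f' := funext h2
  rw [e1, e2]; exact h

lemma DD.mul {v : E} {f f' g g' : E → ℂ} (h : DD v f f') (k : DD v g g') :
    DD v (fun z => f z * g z) (fun z => f' z * g z + f z * g' z) := by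
  refine ⟨h.1.mul k.1, fun z => ?_⟩
  rw [fderiv_fun_mul (h.1 z) (k.1 z)]
  simp [h.2, k.2]
  ring

lemma DD.add {v : E} {f f' g g' : E → ℂ} (h : DD v f f') (k : DD v g g') :
    DD v (fun z => f z + g z) (fun z => f' z + g' z) := by
  refine ⟨h.1.add k.1, fun z => ?_⟩
  rw [fderiv_fun_add (h.1 z) (k.1 z)]
  simp [h.2, k.2]

lemma DD.const (v : E) (c : ℂ) : DD v (fun _ => c) (fun _ => 0) :=
  ⟨differentiable_const c, fun z => by simp⟩

lemma DD.comp {v : E} {f f' : E → ℂ} {G G' : ℂ → ℂ} (hG : ∀ u, HasDerivAt G (G' u) u)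
    (h : DD v f f') : DD v (fun z => G (f z)) (fun z => G' (f z) * f' z) := by
  have key : ∀ z, HasFDerivAt (fun z => G (f z)) _ z := fun z =>
    ((hG (f z)).hasFDerivAt.restrictScalars ℝ).comp z (h.1 z).hasFDerivAt
  refine ⟨fun z => (key z).differentiableAt, fun z => ?_⟩
  rw [(key z).fderiv]
  simp [h.2, mul_comm]

lemma DD.pow {v : E} {f f' : E → ℂ} (h : DD v f f') (n : ℕ) :
    DD v (fun z => f z ^ n) (fun z => n * f z ^ (n-1) * f' z) :=
  DD.comp (G := fun u => u ^ n) (fun u => hasDerivAt_pow n u) h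

lemma DD.sum {ι : Type*} (s : Finset ι) {v : E} {f f' : ι → E → ℂ} (h : ∀ i, DD v (f i) (f' i)) :
    DD v (fun z => ∑ i ∈ s, f i z) (fun z => ∑ i ∈ s, f' i z) := by
  classical
  induction s using Finset.induction_on with
  | empty => simpa using DD.const v 0
  | insert i s hi ih =>
    exact ((h i).add ih).congr (fun z => by simp [hi]) (fun z => by simp [hi])

lemma main_abs {ι : Type*} [Fintype ι] (e : ι → E) (X : ι → E → ℂ) (A B r s : E → ℂ)
    (A1 A2 : ι → E → ℂ) (k : ℂ)
    (hA : ∀ i, DD (e i) A (A1 i)) (hA1 : ∀ i, DD (e i) (A1 i) (A2 i))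
    (hB : ∀ i, DD (e i) B (fun _ => 0)) (hs : ∀ i, DD (e i) s (fun _ => 0))
    (hr : ∀ i, DD (e i) r (X i)) (hX : ∀ i, DD (e i) (X i) (fun _ => 1))
    (hE : ∀ z, ∑ i, X i z * A1 i z = k * A z) (hL : ∀ z, ∑ i, A2 i z = 0)
    (hR : ∀ z, ∑ i, X i z ^ 2 = 2 * r z)
    (a b : ℕ) (α : ℂ) (hα : ∀ n : ℕ, α ≠ -(n : ℂ)) (f : E → ℂ)
    (hf : ∀ z, f z = A z * B z * r z ^ a * s z ^ b * Psi α (r z * s z))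
    (z : E) :
    (∑ i, X i z * fderiv ℝ f z (e i) = (k + 2 * a) * f z
      - 2 / α * A z * B z * r z ^ (a+1) * s z ^ (b+1) * Psi (α+1) (r z * s z)) ∧
    (r z ≠ 0 → ∑ i, fderiv ℝ (fun w => fderiv ℝ f w (e i)) z (e i) =
      2 * (A z * B z * (a * (k + (Fintype.card ι : ℂ) / 2 + a - 1) * r z ^ ((a:ℤ)-1) * s z ^ b
        * Psi α (r z * s z) - (k + (Fintype.card ι : ℂ) / 2 + 2 * a - α) / α * r z ^ a
        * s z ^ (b+1) * Psi (α+1) (r z * s z)) - s z * f z)) := by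
  have a0 := al_ne hα
  have a1 := al_ne (al_succ hα)
  have hP : ∀ i (β : ℂ), (∀ n : ℕ, β ≠ -(n : ℂ)) → DD (e i) (fun z => Psi β (r z * s z))
      (fun z => -(1/β) * Psi (β+1) (r z * s z) * (X i z * s z)) := fun i β hβ =>
    (DD.comp (Psi_deriv β hβ) ((hr i).mul (hs i))).congr (fun _ => rfl) (fun z => by ring)
  set M : E → ℂ := fun z => B z * s z ^ b * (r z ^ a * Psi α (r z * s z)) with hM
  set N : E → ℂ := fun z => B z * s z ^ b * (a * (r z ^ (a-1) * Psi α (r z * s z))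
    + (-(1/α)) * (r z ^ a * s z * Psi (α+1) (r z * s z))) with hN
  set N2 : E → ℂ := fun z => B z * s z ^ b * (a * ((a-1:ℕ) * r z ^ (a-1-1) * Psi α (r z * s z)
    - (1/α) * (r z ^ (a-1) * s z * Psi (α+1) (r z * s z)))
    + (-(1/α)) * (a * r z ^ (a-1) * s z * Psi (α+1) (r z * s z)
     - (1/(α+1)) * r z ^ a * s z ^ 2 * Psi (α+1+1) (r z * s z))) with hN2
  have hBs : ∀ i, DD (e i) (fun z => B z * s z ^ b) (fun _ => 0) := fun i =>
    ((hB i).mul ((hs i).pow b)).congr (fun _ => rfl) (fun z => by ring)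
  have dM : ∀ i, DD (e i) M (fun z => X i z * N z) := fun i =>
    ((hBs i).mul (((hr i).pow a).mul (hP i α hα))).congr (fun _ => rfl) (fun z => by
      simp only [hN]; ring)
  have dN : ∀ i, DD (e i) N (fun z => X i z * N2 z) := fun i =>
    ((hBs i).mul (((DD.const _ (a:ℂ)).mul (((hr i).pow (a-1)).mul (hP i α hα))).add
      ((DD.const _ (-(1/α))).mul ((((hr i).pow a).mul (hs i)).mul
        (hP i _ (al_succ hα)))))).congr (fun _ => rfl) (fun z => by
      simp only [hN2]; ring)
  have df : ∀ i, DD (e i) f (fun z => A1 i z * M z + A z * (X i z * N z)) := fun i =>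
    ((hA i).mul (dM i)).congr (fun z => by rw [hf]; simp only [hM]; ring) (fun _ => rfl)
  have ddf : ∀ i, DD (e i) (fun z => A1 i z * M z + A z * (X i z * N z))
      (fun z => A2 i z * M z + (2 * N z) * (X i z * A1 i z) + A z * N z
        + (A z * N2 z) * X i z ^ 2) := fun i =>
    (((hA1 i).mul (dM i)).add ((hA i).mul ((hX i).mul (dN i)))).congr (fun _ => rfl)
      (fun z => by ring)
  have hrN : ∀ z, r z * N z = a * M z
      - 1 / α * B z * r z ^ (a+1) * s z ^ (b+1) * Psi (α+1) (r z * s z) := fun z => by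
    simp only [hN, hM]
    rcases a with _ | a
    · simp; ring
    · simp only [Nat.add_sub_cancel]; ring
  constructor
  · have : ∀ i, X i z * fderiv ℝ f z (e i) = (X i z * A1 i z) * M z + X i z ^ 2 * (A z * N z) :=
      fun i => by rw [(df i).2]; ring
    simp_rw [this]
    rw [Finset.sum_add_distrib, ← Finset.sum_mul, ← Finset.sum_mul, hE, hR, hf]
    have := hrN z
    simp only [hM] at this ⊢
    linear_combination 2 * A z * this
  · intro hrz
    have : ∀ i, fderiv ℝ (fun w => fderiv ℝ f w (e i)) z (e i) =
      A2 i z * M z + (2 * N z) * (X i z * A1 i z) + A z * N z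
        + (A z * N2 z) * X i z ^ 2 := fun i => by
      have e1 : (fun w => fderiv ℝ f w (e i)) = (fun z => A1 i z * M z + A z * (X i z * N z)) :=
        funext fun w => (df i).2 w
      rw [e1, (ddf i).2]
    simp_rw [this]
    simp only [Finset.sum_add_distrib, ← Finset.sum_mul, ← Finset.mul_sum]
    rw [hE, hR, hL, Finset.sum_const, Finset.card_univ, nsmul_eq_mul, hf]
    have hrec := Psi_rec α hα (r z * s z)
    have e2 : (a:ℂ) * r z ^ ((a:ℤ)-1) = a * r z ^ (a-1) := by
      rcases a with _ | a
      · simp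
      · simp
    have e3 : (a:ℂ) * r z ^ a = a * (r z * r z ^ (a-1)) := by
      rcases a with _ | a
      · simp
      · simp only [Nat.add_sub_cancel]; push_cast; ring
    have e4 : (a:ℂ) * ((a-1:ℕ) * (r z * r z ^ (a-1-1))) = a * ((a-1) * r z ^ (a-1)) := by
      rcases a with _ | _ | a
      · simp
      · simp
      · simp only [Nat.add_sub_cancel]; push_cast; ring
    have hrN2 : r z * N2 z = B z * s z ^ b * (a * ((a-1) * r z ^ (a-1)) * Psi α (r z * s z)
       - 2 * a * r z ^ a * s z / α * Psi (α+1) (r z * s z)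
       + r z ^ a * s z * ((r z * s z) * Psi (α+1+1) (r z * s z) / (α * (α+1)))) := by
      simp only [hN2]
      rw [← e4]
      have : (2:ℂ) * a * r z ^ a * s z / α = 2 * s z / α * (a * (r z * r z ^ (a-1))) := by
        rw [← e3]; ring
      rw [this]
      field_simp
      ring
    have e5 : (r z * s z) * Psi (α+1+1) (r z * s z) / (α * (α+1))
      = Psi (α+1) (r z * s z) - Psi α (r z * s z) := by linear_combination hrec
    rw [e5] at hrN2
    have : (a:ℂ) * (k + (Fintype.card ι : ℂ) / 2 + a - 1) * r z ^ ((a:ℤ)-1)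
      = (k + (Fintype.card ι : ℂ) / 2 + a - 1) * (a * r z ^ (a-1)) := by rw [← e2]; ring
    rw [this]
    have : A z * N2 z * (2 * r z) = 2 * A z * (r z * N2 z) := by ring
    rw [this, hrN2]
    simp only [hN, hM]
    field_simp
    ring
end

section
variable {E : Type*} [NormedAddCommGroup E] [NormedSpace ℝ E]

lemma DD_poly {n : ℕ} (L : Fin n → E →L[ℝ] ℝ) (v : E) (i : Fin n)
    (hv : ∀ j, L j v = if j = i then 1 else 0) (h : MvPolynomial (Fin n) ℝ) :
    DD v (fun z => ((MvPolynomial.eval (fun j => L j z) h : ℝ) : ℂ))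
      (fun z => ((MvPolynomial.eval (fun j => L j z) (MvPolynomial.pderiv i h) : ℝ) : ℂ)) := by
  induction h using MvPolynomial.induction_on with
  | C c => exact (DD.const v (c:ℂ)).congr (fun _ => by simp) (fun _ => by simp)
  | add p q hp hq => exact (hp.add hq).congr (fun _ => by simp) (fun _ => by simp)
  | mul_X p j hp =>
    have hX : DD v (fun z => ((L j z : ℝ) : ℂ)) (fun _ => if j = i then 1 else 0) := by
      have key : ∀ z, HasFDerivAt (fun z => ((L j z : ℝ) : ℂ)) (Complex.ofRealCLM.comp (L j)) z :=
        fun z => (Complex.ofRealCLM.comp (L j)).hasFDerivAt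
      refine ⟨fun z => (key z).differentiableAt, fun z => ?_⟩
      rw [(key z).fderiv]
      by_cases hij : j = i <;> simp [hv, hij]
    refine (hp.mul hX).congr (fun z => by simp) (fun z => ?_)
    by_cases hij : j = i
    · subst hij; simp [Derivation.leibniz]; ring
    · simp [Derivation.leibniz, MvPolynomial.pderiv_X_of_ne hij, hij]; ring

lemma DD_poly0 {n : ℕ} (L : Fin n → E →L[ℝ] ℝ) (v : E)
    (hv : ∀ j, L j v = 0) (h : MvPolynomial (Fin n) ℝ) :
    DD v (fun z => ((MvPolynomial.eval (fun j => L j z) h : ℝ) : ℂ)) (fun _ => 0) := by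
  induction h using MvPolynomial.induction_on with
  | C c => exact (DD.const v (c:ℂ)).congr (fun _ => by simp) (fun _ => by simp)
  | add p q hp hq => exact (hp.add hq).congr (fun _ => by simp) (fun _ => by simp)
  | mul_X p j hp =>
    have hX : DD v (fun z => ((L j z : ℝ) : ℂ)) (fun _ => 0) := by
      have key : ∀ z, HasFDerivAt (fun z => ((L j z : ℝ) : ℂ)) (Complex.ofRealCLM.comp (L j)) z :=
        fun z => (Complex.ofRealCLM.comp (L j)).hasFDerivAt
      refine ⟨fun z => (key z).differentiableAt, fun z => ?_⟩
      rw [(key z).fderiv]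
      simp [hv]
    exact (hp.mul hX).congr (fun z => by simp) (fun z => by simp)

/-- one block version -/
lemma block {n m : ℕ} (L : Fin n → E →L[ℝ] ℝ) (K : Fin m → E →L[ℝ] ℝ) (e : Fin n → E)
    (hL : ∀ i j, L j (e i) = if j = i then 1 else 0) (hK : ∀ i j, K j (e i) = 0)
    (k : ℕ) (h₁ : MvPolynomial (Fin n) ℝ) (h₂ : MvPolynomial (Fin m) ℝ)
    (hhom : h₁.IsHomogeneous k)
    (hharm : ∑ i : Fin n, MvPolynomial.pderiv i (MvPolynomial.pderiv i h₁) = 0)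
    (a b : ℕ) (α : ℂ) (hα : ∀ n : ℕ, α ≠ -(n : ℂ)) (A B r s f : E → ℂ)
    (hA : ∀ z, A z = ((MvPolynomial.eval (fun j => L j z) h₁ : ℝ) : ℂ))
    (hB : ∀ z, B z = ((MvPolynomial.eval (fun j => K j z) h₂ : ℝ) : ℂ))
    (hr : ∀ z, r z = (((∑ j, L j z ^ 2) / 2 : ℝ) : ℂ))
    (hs : ∀ z, s z = (((∑ j, K j z ^ 2) / 2 : ℝ) : ℂ))
    (hf : ∀ z, f z = A z * B z * r z ^ a * s z ^ b * Psi α (r z * s z))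
    (z : E) :
    (∑ i, ((L i z : ℝ) : ℂ) * fderiv ℝ f z (e i) = (k + 2 * a) * f z
      - 2 / α * A z * B z * r z ^ (a+1) * s z ^ (b+1) * Psi (α+1) (r z * s z)) ∧
    (r z ≠ 0 → ∑ i, fderiv ℝ (fun w => fderiv ℝ f w (e i)) z (e i) =
      2 * (A z * B z * (a * (k + (n : ℂ) / 2 + a - 1) * r z ^ ((a:ℤ)-1) * s z ^ b
        * Psi α (r z * s z) - (k + (n : ℂ) / 2 + 2 * a - α) / α * r z ^ a
        * s z ^ (b+1) * Psi (α+1) (r z * s z)) - s z * f z)) := by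
  have := main_abs e (fun i z => ((L i z : ℝ) : ℂ)) A B r s
    (fun i z => ((MvPolynomial.eval (fun j => L j z) (MvPolynomial.pderiv i h₁) : ℝ) : ℂ))
    (fun i z => ((MvPolynomial.eval (fun j => L j z)
      (MvPolynomial.pderiv i (MvPolynomial.pderiv i h₁)) : ℝ) : ℂ)) k
    (fun i => (DD_poly L (e i) i (hL i) h₁).congr hA (fun _ => rfl))
    (fun i => (DD_poly L (e i) i (hL i) _))
    (fun i => (DD_poly0 K (e i) (hK i) h₂).congr hB (fun _ => rfl))
    (fun i => (DD_poly0 K (e i) (hK i)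
      (MvPolynomial.C (1/2) * ∑ j, MvPolynomial.X j ^ 2)).congr
      (fun z => by rw [hs]; congr 1; simp; ring) (fun _ => rfl))
    (fun i => (DD_poly L (e i) i (hL i)
      (MvPolynomial.C (1/2) * ∑ j, MvPolynomial.X j ^ 2)).congr
      (fun z => by rw [hr]; congr 1; simp; ring) (fun z => by
        congr 1
        simp [Derivation.leibniz, Derivation.leibniz_pow, MvPolynomial.pderiv_X, Pi.single_apply]))
    (fun i => (DD_poly L (e i) i (hL i) (MvPolynomial.X i)).congr
      (fun z => by simp) (fun z => by simp))
    (fun z => by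
      have := congrArg (MvPolynomial.eval (fun j => L j z)) hhom.sum_X_mul_pderiv
      simp at this
      rw [hA]
      exact_mod_cast this)
    (fun z => by
      have := congrArg (MvPolynomial.eval (fun j => L j z)) hharm
      simp only [map_sum, map_zero] at this
      exact_mod_cast this)
    (fun z => by rw [hr]; push_cast; ring)
    a b α hα f hf z
  simpa only [Fintype.card_fin] using this
end

theorem stmt_14 (p q k l : ℕ) (hp : 1 ≤ p) (hq : 1 ≤ q)
    (h₁ : MvPolynomial (Fin p) ℝ) (h₂ : MvPolynomial (Fin q) ℝ)
    (hhom₁ : h₁.IsHomogeneous k) (hhom₂ : h₂.IsHomogeneous l)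
    (hharm₁ : ∑ i : Fin p, MvPolynomial.pderiv i (MvPolynomial.pderiv i h₁) = 0)
    (hharm₂ : ∑ j : Fin q, MvPolynomial.pderiv j (MvPolynomial.pderiv j h₂) = 0)
    (κp κm : ℂ) (hκp : κp = (k : ℂ) + (p : ℂ) / 2) (hκm : κm = (l : ℂ) + (q : ℂ) / 2)
    (a b : ℕ) (α : ℂ) (hα : ∀ n : ℕ, α ≠ -(n : ℂ))
    (E₁ E₂ : Pt p q → ℂ)
    (hE₁ : E₁ = fun z => ((MvPolynomial.eval z.1 h₁ : ℝ) : ℂ))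
    (hE₂ : E₂ = fun z => ((MvPolynomial.eval z.2 h₂ : ℝ) : ℂ))
    (f : Pt p q → ℂ)
    (hf : f = fun z => E₁ z * E₂ z * ((rhox p q z : ℝ) : ℂ) ^ (a : ℤ) *
      ((rhoy p q z : ℝ) : ℂ) ^ (b : ℤ) * psiF p q α z) :
    ∀ z : Pt p q, z.1 ≠ 0 → z.2 ≠ 0 →
      HOp p q f z = (-κp + κm - 2 * (a : ℂ) + 2 * (b : ℂ)) * f z ∧
      XpOp p q f z = E₁ z * E₂ z *
        (-(a : ℂ) * (κp + (a : ℂ) - 1) * ((rhox p q z : ℝ) : ℂ) ^ ((a : ℤ) - 1) *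
            ((rhoy p q z : ℝ) : ℂ) ^ (b : ℤ) * psiF p q α z
          + ((κp + 2 * (a : ℂ) - α) / α) * ((rhox p q z : ℝ) : ℂ) ^ (a : ℤ) *
            ((rhoy p q z : ℝ) : ℂ) ^ ((b : ℤ) + 1) * psiF p q (α + 1) z) ∧
      XmOp p q f z = E₁ z * E₂ z *
        ((b : ℂ) * (κm + (b : ℂ) - 1) * ((rhox p q z : ℝ) : ℂ) ^ (a : ℤ) *
            ((rhoy p q z : ℝ) : ℂ) ^ ((b : ℤ) - 1) * psiF p q α z
          - ((κm + 2 * (b : ℂ) - α) / α) * ((rhox p q z : ℝ) : ℂ) ^ ((a : ℤ) + 1) *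
            ((rhoy p q z : ℝ) : ℂ) ^ (b : ℤ) * psiF p q (α + 1) z) := by
  subst hE₁ hE₂ hκp hκm
  intro z hz1 hz2
  have psd : ∀ β, psiF p q β z = Psi β (((rhox p q z : ℝ) : ℂ) * ((rhoy p q z : ℝ) : ℂ)) :=
    fun β => by simp [psiF]
  have B1 := block (E := Pt p q)
    (fun i => (ContinuousLinearMap.proj i).comp (ContinuousLinearMap.fst ℝ (Fin p → ℝ) (Fin q → ℝ)))
    (fun i => (ContinuousLinearMap.proj i).comp (ContinuousLinearMap.snd ℝ (Fin p → ℝ) (Fin q → ℝ)))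
    (fun i => ((Pi.single i 1 : Fin p → ℝ), (0 : Fin q → ℝ)))
    (fun i j => by simp [Pi.single_apply]) (fun i j => by simp)
    k h₁ h₂ hhom₁ hharm₁ a b α hα
    (fun z => ((MvPolynomial.eval z.1 h₁ : ℝ) : ℂ)) (fun z => ((MvPolynomial.eval z.2 h₂ : ℝ) : ℂ))
    (fun z => ((rhox p q z : ℝ) : ℂ)) (fun z => ((rhoy p q z : ℝ) : ℂ)) f
    (fun z => rfl) (fun z => rfl) (fun z => rfl) (fun z => rfl)
    (fun z => by rw [hf]; simp [psiF]) z
  have B2 := block (E := Pt p q)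
    (fun i => (ContinuousLinearMap.proj i).comp (ContinuousLinearMap.snd ℝ (Fin p → ℝ) (Fin q → ℝ)))
    (fun i => (ContinuousLinearMap.proj i).comp (ContinuousLinearMap.fst ℝ (Fin p → ℝ) (Fin q → ℝ)))
    (fun i => ((0 : Fin p → ℝ), (Pi.single i 1 : Fin q → ℝ)))
    (fun i j => by simp [Pi.single_apply]) (fun i j => by simp)
    l h₂ h₁ hhom₂ hharm₂ b a α hα
    (fun z => ((MvPolynomial.eval z.2 h₂ : ℝ) : ℂ)) (fun z => ((MvPolynomial.eval z.1 h₁ : ℝ) : ℂ))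
    (fun z => ((rhoy p q z : ℝ) : ℂ)) (fun z => ((rhox p q z : ℝ) : ℂ)) f
    (fun z => rfl) (fun z => rfl) (fun z => rfl) (fun z => rfl)
    (fun z => by rw [hf]; simp only [psiF, zpow_natCast, Complex.ofReal_mul]
                 rw [mul_comm (rhoy p q z : ℂ) (rhox p q z : ℂ)]; ring) z
  have pos : ∀ {n : ℕ} (x : Fin n → ℝ), x ≠ 0 → (∑ i, x i ^ 2) / 2 ≠ 0 := by
    intro n x hx h0
    apply hx
    have : ∑ i, x i ^ 2 = 0 := by linarith
    rw [Finset.sum_eq_zero_iff_of_nonneg (fun i _ => sq_nonneg _)] at this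
    ext i
    simpa using this i (Finset.mem_univ i)
  have hx0 : ((rhox p q z : ℝ) : ℂ) ≠ 0 := by exact_mod_cast pos z.1 hz1
  have hy0 : ((rhoy p q z : ℝ) : ℂ) ≠ 0 := by exact_mod_cast pos z.2 hz2
  have B12 := B1.2 hx0
  have B22 := B2.2 hy0
  have B11 := B1.1
  have B21 := B2.1
  rw [mul_comm (rhoy p q z : ℂ) (rhox p q z : ℂ)] at B21 B22
  rw [← psd, ← psd] at B12 B22
  rw [← psd] at B11 B21
  have ry : (((∑ j, z.2 j ^ 2 : ℝ)) : ℂ) = 2 * ((rhoy p q z : ℝ) : ℂ) := by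
    simp only [rhoy]; push_cast; ring
  have rx : (((∑ j, z.1 j ^ 2 : ℝ)) : ℂ) = 2 * ((rhox p q z : ℝ) : ℂ) := by
    simp only [rhox]; push_cast; ring
  have ey : ((rhoy p q z : ℝ) : ℂ) ^ ((b:ℤ)+1) = ((rhoy p q z : ℝ) : ℂ) ^ (b+1) := by
    rw [← zpow_natCast]; push_cast; rfl
  have ex : ((rhox p q z : ℝ) : ℂ) ^ ((a:ℤ)+1) = ((rhox p q z : ℝ) : ℂ) ^ (a+1) := by
    rw [← zpow_natCast]; push_cast; rfl
  refine ⟨?_, ?_, ?_⟩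
  · change -(∑ i, ((z.1 i : ℝ) : ℂ) * fderiv ℝ f z _) - _ + (∑ i, ((z.2 i : ℝ) : ℂ) * fderiv ℝ f z _) + _ = _
    erw [B11, B21]
    ring
  · change -(1 / 2 : ℂ) * ((∑ i, fderiv ℝ (fun w => fderiv ℝ f w _) z _) + _) = _
    rw [B12, ry, ey]
    simp only [zpow_natCast]
    ring
  · change (1 / 2 : ℂ) * (_ + (∑ i, fderiv ℝ (fun w => fderiv ℝ f w _) z _)) = _
    rw [B22, rx, ex]
    simp only [zpow_natCast]
    ring
end
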